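/- arXiv:2102.00042 — 15 statements merged into one kernel-verified Lean document; each statement's English description precedes it below -/
import Mathlib

section
/- There exists a constant C > 0 (one may take C = 32) such that for every real number A > 0 and every real number δ with |δ| < 1/32, one has (1/2)·log(A) ≤ log(1 + (1/2 + δ)·(A − 1)) + C·δ². (Under these hypotheses 1 + (1/2 + δ)·(A − 1) > 0, so the logarithm is defined.) -/
theorem stmt_0 :
    ∃ C : ℝ, C > 0 ∧ ∀ A δ : ℝ, 0 < A → |δ| < 1 / 32 →
      (1 / 2) * Real.log A ≤ Real.log (1 + (1 / 2 + δ) * (A - 1)) + C * δ ^ 2 := by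
  refine ⟨32, by norm_num, ?_⟩
  intro A δ hA hδ
  obtain ⟨h1, h2⟩ := abs_lt.mp hδ
  have hB : 0 < 1 + (1 / 2 + δ) * (A - 1) := by
    have : 0 < (1 / 2 + δ) * A := mul_pos (by linarith) hA
    nlinarith
  have hx : 4 * δ ^ 2 < 1 / 2 := by nlinarith
  have hpos : 0 < 1 - 4 * δ ^ 2 := by linarith
  have key : (1 - 4 * δ ^ 2) * A ≤ (1 + (1 / 2 + δ) * (A - 1)) ^ 2 := by
    nlinarith [sq_nonneg ((1 / 2 + δ) * A - (1 / 2 - δ))]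
  have hl := Real.log_le_log (mul_pos hpos hA) key
  rw [Real.log_mul hpos.ne' hA.ne', Real.log_pow] at hl
  have h3 := Real.one_sub_inv_le_log_of_pos hpos
  have h4 : (1 - 4 * δ ^ 2)⁻¹ ≤ 1 + 8 * δ ^ 2 := by
    rw [inv_le_iff_one_le_mul₀ hpos]
    nlinarith [sq_nonneg δ, mul_nonneg (sq_nonneg δ) (sub_nonneg.mpr hx.le)]
  push_cast at hl
  nlinarith [sq_nonneg δ]
end

section
/- Let (x₀,y₀),(x₁,y₁) ∈ X with x₀ ≠ x₁, and define γ : [0,1] → ℝ by γ(t) = ((1−t)·y₀/f(x₀) + t·y₁/f(x₁))·f((1−t)·x₀ + t·x₁). Then for every t ∈ [0,1], |γ'(t)/(x₁−x₀) − (y₁−y₀)/(x₁−x₀)| ≤ 3k. -/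
theorem stmt_1 (ε k : ℝ) (hε : 0 < ε) (hεk : ε < k) (hk : k < 1 / 2)
    (φ : ℝ → ℝ) (hφc : Continuous φ) (hφ0 : ∀ x, 0 ≤ φ x) (hφ1 : ∀ x, φ x ≤ 1)
    (hφsupp : ∀ x, x ∉ Set.Icc (-k) k → φ x = 0)
    (hφint : (∫ x, φ x) = k)
    (f f' : ℝ → ℝ)
    (hfd : ∀ x, HasDerivAt f (f' x) x)
    (hfd2 : ∀ x, HasDerivAt f' (φ x) x)
    (hf'm1 : f' (-1) = 0) (hfm1 : f (-1) = ε)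
    (x₀ y₀ x₁ y₁ : ℝ)
    (hx₀ : x₀ ∈ Set.Icc (-1 : ℝ) 1) (hy₀ : 0 ≤ y₀ ∧ y₀ ≤ f x₀)
    (hx₁ : x₁ ∈ Set.Icc (-1 : ℝ) 1) (hy₁ : 0 ≤ y₁ ∧ y₁ ≤ f x₁)
    (hne : x₀ ≠ x₁)
    (t g : ℝ) (ht : t ∈ Set.Icc (0 : ℝ) 1)
    (hg : HasDerivAt
      (fun s => ((1 - s) * (y₀ / f x₀) + s * (y₁ / f x₁)) * f ((1 - s) * x₀ + s * x₁)) g t) :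
    |g / (x₁ - x₀) - (y₁ - y₀) / (x₁ - x₀)| ≤ 3 * k := by
  have hk0 : 0 < k := hε.trans hεk
  have hint : MeasureTheory.Integrable φ := by
    by_contra h
    rw [MeasureTheory.integral_undef h] at hφint
    linarith
  have hd : ∀ x, -1 ≤ x → 0 ≤ f' x ∧ f' x ≤ k := by
    intro x hx
    have h1 : ∫ y in (-1 : ℝ)..x, φ y = f' x - f' (-1) :=
      intervalIntegral.integral_eq_sub_of_hasDerivAt (fun y _ => hfd2 y)
        (hφc.intervalIntegrable _ _)
    have h2 : 0 ≤ ∫ y in (-1 : ℝ)..x, φ y :=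
      intervalIntegral.integral_nonneg hx (fun y _ => hφ0 y)
    have h3 : ∫ y in (-1 : ℝ)..x, φ y ≤ ∫ y, φ y := by
      rw [intervalIntegral.integral_of_le hx]
      exact MeasureTheory.setIntegral_le_integral hint (Filter.Eventually.of_forall hφ0)
    constructor <;> linarith
  have hlt : ∀ u v, -1 ≤ u → u < v → ∃ p, 0 ≤ p ∧ p ≤ k ∧ f v - f u = p * (v - u) := by
    intro u v hu huv
    obtain ⟨c, hc, hc'⟩ := exists_hasDerivAt_eq_slope f f' huv
      (fun y _ => (hfd y).continuousAt.continuousWithinAt) (fun y _ => hfd y)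
    have h := hd c (by linarith [hc.1])
    refine ⟨f' c, h.1, h.2, ?_⟩
    have : v - u ≠ 0 := by linarith
    rw [hc']
    field_simp
  have hmv : ∀ u v, -1 ≤ u → -1 ≤ v → ∃ p, 0 ≤ p ∧ p ≤ k ∧ f v - f u = p * (v - u) := by
    intro u v hu hv
    rcases lt_trichotomy u v with h | h | h
    · exact hlt u v hu h
    · exact ⟨0, le_rfl, hk0.le, by simp [h]⟩
    · obtain ⟨p, h1, h2, h3⟩ := hlt v u hv h
      exact ⟨p, h1, h2, by linarith⟩
  have hpos : ∀ x, -1 ≤ x → 0 < f x := by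
    intro x hx
    obtain ⟨p, h1, _, h3⟩ := hmv (-1) x le_rfl hx
    have := mul_nonneg h1 (by linarith : 0 ≤ x - -1)
    linarith
  have hf0 := hpos x₀ hx₀.1
  have hf1 := hpos x₁ hx₁.1
  obtain ⟨a, ha⟩ : ∃ a, a = y₀ / f x₀ := ⟨_, rfl⟩
  obtain ⟨b, hb⟩ : ∃ b, b = y₁ / f x₁ := ⟨_, rfl⟩
  have ha0 : 0 ≤ a := ha ▸ div_nonneg hy₀.1 hf0.le
  have ha1 : a ≤ 1 := ha ▸ (div_le_one hf0).2 hy₀.2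
  have hb0 : 0 ≤ b := hb ▸ div_nonneg hy₁.1 hf1.le
  have hb1 : b ≤ 1 := hb ▸ (div_le_one hf1).2 hy₁.2
  have hya : y₀ = a * f x₀ := by rw [ha]; field_simp
  have hyb : y₁ = b * f x₁ := by rw [hb]; field_simp
  rw [← ha, ← hb] at hg
  obtain ⟨ht0, ht1⟩ := ht
  have hX : -1 ≤ (1 - t) * x₀ + t * x₁ := by nlinarith [hx₀.1, hx₁.1]
  have hlin : ∀ u v : ℝ, HasDerivAt (fun s : ℝ => (1 - s) * u + s * v) (v - u) t := by
    intro u v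
    have h := (((hasDerivAt_id t).const_sub 1).mul_const u).add ((hasDerivAt_id t).mul_const v)
    refine h.congr_deriv ?_
    ring
  have hg2 := (hlin a b).mul ((hfd ((1 - t) * x₀ + t * x₁)).comp t (hlin x₀ x₁))
  have hge := hg.unique hg2
  simp only [Function.comp_apply] at hge
  obtain ⟨p, hp0, hp1, hp⟩ := hmv x₁ _ hx₁.1 hX
  obtain ⟨q, hq0, hq1, hq⟩ := hmv x₀ _ hx₀.1 hX
  obtain ⟨hr0, hr1⟩ := hd _ hX
  generalize f' ((1 - t) * x₀ + t * x₁) = r at *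
  generalize f ((1 - t) * x₀ + t * x₁) = F at *
  have hne' : x₁ - x₀ ≠ 0 := sub_ne_zero.2 hne.symm
  have key : g / (x₁ - x₀) - (y₁ - y₀) / (x₁ - x₀)
      = ((1 - t) * a + t * b) * r - (1 - t) * (b * p) - t * (a * q) := by
    rw [← sub_div, div_eq_iff hne', hge, hya, hyb]
    linear_combination b * hp - a * hq
  have m : ∀ c z : ℝ, 0 ≤ c → c ≤ 1 → 0 ≤ z → z ≤ k → 0 ≤ c * z ∧ c * z ≤ k := by
    intro c z h1 h2 h3 h4
    exact ⟨mul_nonneg h1 h3, by nlinarith⟩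
  obtain ⟨h1, h1'⟩ := m b p hb0 hb1 hp0 hp1
  obtain ⟨h2, h2'⟩ := m a q ha0 ha1 hq0 hq1
  obtain ⟨h3, h3'⟩ := m ((1 - t) * a + t * b) r (by nlinarith) (by nlinarith) hr0 hr1
  obtain ⟨h4, h4'⟩ := m (1 - t) (b * p) (by linarith) (by linarith) h1 h1'
  obtain ⟨h5, h5'⟩ := m t (a * q) ht0 ht1 h2 h2'
  rw [key, abs_le]
  constructor <;> linarith
end

section
/- Assume moreover k < 1/4. Let (x₀,y₀),(x₁,y₁) ∈ X with x₀ ≠ x₁, and define γ : [0,1] → ℝ by γ(t) = ((1−t)·y₀/f(x₀) + t·y₁/f(x₁))·f((1−t)·x₀ + t·x₁). Then for every t ∈ [0,1], |γ''(t)| ≤ (x₁−x₀)² · (2k/f(x_t)) · (|(y₁−y₀)/(x₁−x₀)| + 2), where x_t = (1−t)·x₀ + t·x₁. -/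
theorem mvt_aux (f f' : ℝ → ℝ) (hfd : ∀ x, HasDerivAt f (f' x) x) (a b C : ℝ) (hab : a ≤ b)
    (h : ∀ x, a < x → x < b → f' x ≤ C) : f b - f a ≤ C * (b - a) := by
  refine (convex_Icc a b).image_sub_le_mul_sub_of_deriv_le
    (fun x _ => (hfd x).continuousAt.continuousWithinAt)
    (fun x _ => (hfd x).differentiableAt.differentiableWithinAt) ?_ a ⟨le_refl a, hab⟩ b
    ⟨hab, le_refl b⟩ hab
  intro x hx
  rw [interior_Icc] at hx
  rw [(hfd x).deriv]
  exact h x hx.1 hx.2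

theorem alg_aux (k a0 a1 f0 f1 F h p fp : ℝ) (hk0 : 0 < k) (hk4 : k < 1 / 4)
    (ha0 : 0 ≤ a0) (ha0' : a0 ≤ 1) (ha1 : 0 ≤ a1) (ha1' : a1 ≤ 1) (hh : h ≠ 0)
    (hF : 0 < F) (hm : (f0 ≤ F ∧ F ≤ f1) ∨ (f1 ≤ F ∧ F ≤ f0)) (hl : |f1 - f0| ≤ k * |h|)
    (hfp0 : 0 ≤ fp) (hfp : fp ≤ k) (hp0 : 0 ≤ p) (hpF : p * F ≤ 3 / 2 * k) (A : ℝ)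
    (hA0 : 0 ≤ A) (hA1 : A ≤ 1) :
    |2 * (a1 - a0) * h * fp + A * h ^ 2 * p| ≤
      h ^ 2 * (2 * k / F) * (|(a1 * f1 - a0 * f0) / h| + 2) := by
  have hh' : 0 < |h| := abs_pos.mpr hh
  have e1 : |(a1 - a0) * F| ≤ |a1 * f1 - a0 * f0| + k * |h| := by
    have e2 : |a1 * (F - f1) - a0 * (F - f0)| ≤ |f1 - f0| := by
      rcases hm with ⟨h1, h2⟩ | ⟨h1, h2⟩
      · rw [abs_of_nonneg (by linarith : 0 ≤ f1 - f0), abs_le]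
        constructor <;> nlinarith
      · rw [abs_of_nonpos (by linarith : f1 - f0 ≤ 0), abs_le]
        constructor <;> nlinarith
    have : (a1 - a0) * F = (a1 * f1 - a0 * f0) + (a1 * (F - f1) - a0 * (F - f0)) := by ring
    rw [this]
    exact (abs_add_le _ _).trans (by linarith)
  rw [abs_div]
  set D := |a1 * f1 - a0 * f0| with hD
  have hD0 : 0 ≤ D := abs_nonneg _
  have e3 : h ^ 2 * (2 * k / F) * (D / |h| + 2) = (2 * k * |h| * D + 4 * k * |h| ^ 2) / F := by
    rw [← sq_abs h]
    field_simp
    ring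
  rw [e3, le_div_iff₀ hF, ← abs_of_pos hF, ← abs_mul]
  have e4 : (2 * (a1 - a0) * h * fp + A * h ^ 2 * p) * F =
    2 * ((a1 - a0) * F) * h * fp + h ^ 2 * (A * (p * F)) := by ring
  rw [e4]
  refine (abs_add_le _ _).trans ?_
  have e5 : |h ^ 2 * (A * (p * F))| ≤ |h| ^ 2 * (3 / 2 * k) := by
    have : 0 ≤ p * F := by positivity
    rw [abs_of_nonneg (by positivity), sq_abs]
    have : A * (p * F) ≤ 3 / 2 * k := by nlinarith
    gcongr
  have e6 : |2 * ((a1 - a0) * F) * h * fp| ≤ 2 * (D + k * |h|) * |h| * k := by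
    rw [abs_mul, abs_mul, abs_mul 2, abs_of_nonneg hfp0, abs_two]
    gcongr
  have e7 : k * (k * |h| ^ 2) ≤ 1 / 4 * (k * |h| ^ 2) := by gcongr
  have e8 : 0 ≤ k * |h| ^ 2 := by positivity
  nlinarith

theorem lin_aux (a b s : ℝ) : HasDerivAt (fun u : ℝ => (1 - u) * a + u * b) (b - a) s := by
  have h := (((hasDerivAt_id s).const_sub 1).mul_const a).add ((hasDerivAt_id s).mul_const b)
  refine h.congr_deriv ?_
  ring

theorem stmt_2 (ε k : ℝ) (hε : 0 < ε) (hεk : ε < k) (hk : k < 1 / 2) (hk4 : k < 1 / 4)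
    (φ : ℝ → ℝ) (hφc : Continuous φ) (hφ0 : ∀ x, 0 ≤ φ x) (hφ1 : ∀ x, φ x ≤ 1)
    (hφsupp : ∀ x, x ∉ Set.Icc (-k) k → φ x = 0)
    (hφint : (∫ x, φ x) = k)
    (f f' : ℝ → ℝ)
    (hfd : ∀ x, HasDerivAt f (f' x) x)
    (hfd2 : ∀ x, HasDerivAt f' (φ x) x)
    (hf'm1 : f' (-1) = 0) (hfm1 : f (-1) = ε)
    (x₀ y₀ x₁ y₁ : ℝ)
    (hx₀ : x₀ ∈ Set.Icc (-1 : ℝ) 1) (hy₀ : 0 ≤ y₀ ∧ y₀ ≤ f x₀)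
    (hx₁ : x₁ ∈ Set.Icc (-1 : ℝ) 1) (hy₁ : 0 ≤ y₁ ∧ y₁ ≤ f x₁)
    (hne : x₀ ≠ x₁)
    (γ' : ℝ → ℝ)
    (hγ' : ∀ s, HasDerivAt
      (fun u => ((1 - u) * (y₀ / f x₀) + u * (y₁ / f x₁)) * f ((1 - u) * x₀ + u * x₁)) (γ' s) s)
    (t g : ℝ) (ht : t ∈ Set.Icc (0 : ℝ) 1)
    (hg : HasDerivAt γ' g t) :
    |g| ≤ (x₁ - x₀) ^ 2 * (2 * k / f ((1 - t) * x₀ + t * x₁)) *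
      (|(y₁ - y₀) / (x₁ - x₀)| + 2) := by
  have hk0 : 0 < k := hε.trans hεk
  have hφi : MeasureTheory.Integrable φ := by
    by_contra h
    rw [MeasureTheory.integral_undef h] at hφint
    linarith
  have hmono' : Monotone f' := monotone_of_hasDerivAt_nonneg hfd2 hφ0
  have hf'0 : ∀ x, -1 ≤ x → 0 ≤ f' x := fun x hx => hf'm1 ▸ hmono' hx
  have hf'1 : f' 1 ≤ k := by
    have h1 : ∫ x in (-1 : ℝ)..1, φ x = f' 1 - f' (-1) :=
      intervalIntegral.integral_eq_sub_of_hasDerivAt (fun x _ => hfd2 x)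
        (hφc.intervalIntegrable _ _)
    rw [intervalIntegral.integral_of_le (by norm_num)] at h1
    have h2 := MeasureTheory.setIntegral_le_integral (s := Set.Ioc (-1 : ℝ) 1) hφi
      (Filter.Eventually.of_forall hφ0)
    linarith
  have hf'k : ∀ x, x ≤ 1 → f' x ≤ k := fun x hx => (hmono' hx).trans hf'1
  have hfmono : ∀ a b, -1 ≤ a → a ≤ b → f a ≤ f b := by
    intro a b ha hab
    have := mvt_aux (fun x => - f x) (fun x => - f' x) (fun x => (hfd x).neg) a b 0 hab
      (fun x h1 _ => by have := hf'0 x (by linarith); linarith)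
    linarith
  have hflip : ∀ a b, a ≤ b → b ≤ 1 → f b - f a ≤ k * (b - a) := fun a b hab hb =>
    mvt_aux f f' hfd a b k hab (fun x _ h2 => hf'k x (by linarith))
  have hfpos : ∀ x, -1 ≤ x → 0 < f x := fun x hx => by
    have := hfmono (-1) x le_rfl hx
    linarith
  have hf'nk : f' (-k) ≤ 0 := by
    have := mvt_aux f' φ hfd2 (-1) (-k) 0 (by linarith)
      (fun x _ h2 => (hφsupp x (fun h => by linarith [h.1])).le)
    linarith
  have hfnk : f (-k) ≤ ε := by
    have := mvt_aux f f' hfd (-1) (-k) 0 (by linarith)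
      (fun x _ h2 => (hmono' h2.le).trans hf'nk)
    linarith
  have hγeq : γ' = fun s => (y₁ / f x₁ - y₀ / f x₀) * f ((1 - s) * x₀ + s * x₁) +
      ((1 - s) * (y₀ / f x₀) + s * (y₁ / f x₁)) *
        (f' ((1 - s) * x₀ + s * x₁) * (x₁ - x₀)) := by
    funext s
    refine (hγ' s).unique ?_
    exact (lin_aux _ _ s).mul ((hfd _).comp s (lin_aux x₀ x₁ s))
  have hgeq : g = 2 * (y₁ / f x₁ - y₀ / f x₀) * (x₁ - x₀) * f' ((1 - t) * x₀ + t * x₁) +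
      ((1 - t) * (y₀ / f x₀) + t * (y₁ / f x₁)) * (x₁ - x₀) ^ 2 *
        φ ((1 - t) * x₀ + t * x₁) := by
    rw [hγeq] at hg
    refine hg.unique ?_
    have h1 := (((hfd _).comp t (lin_aux x₀ x₁ t)).const_mul (y₁ / f x₁ - y₀ / f x₀)).add
      ((lin_aux (y₀ / f x₀) (y₁ / f x₁) t).mul
        (((hfd2 _).comp t (lin_aux x₀ x₁ t)).mul_const (x₁ - x₀)))
    refine h1.congr_deriv ?_
    simp only [Function.comp_apply]
    ring
  obtain ⟨ht0, ht1⟩ := ht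
  have hp0 := hfpos x₀ hx₀.1
  have hp1 := hfpos x₁ hx₁.1
  have ha0 : 0 ≤ y₀ / f x₀ := div_nonneg hy₀.1 hp0.le
  have ha1 : 0 ≤ y₁ / f x₁ := div_nonneg hy₁.1 hp1.le
  have hb0 : y₀ / f x₀ ≤ 1 := (div_le_one hp0).2 hy₀.2
  have hb1 : y₁ / f x₁ ≤ 1 := (div_le_one hp1).2 hy₁.2
  have hx1 : -1 ≤ (1 - t) * x₀ + t * x₁ := by nlinarith [hx₀.1, hx₁.1]
  have hx2 : (1 - t) * x₀ + t * x₁ ≤ 1 := by nlinarith [hx₀.2, hx₁.2]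
  have hpx := hfpos _ hx1
  have key := alg_aux k (y₀ / f x₀) (y₁ / f x₁) (f x₀) (f x₁) (f ((1 - t) * x₀ + t * x₁))
    (x₁ - x₀) (φ ((1 - t) * x₀ + t * x₁)) (f' ((1 - t) * x₀ + t * x₁)) hk0 hk4 ha0 hb0 ha1 hb1
    (sub_ne_zero.2 hne.symm) hpx ?_ ?_ (hf'0 _ hx1) (hf'k _ hx2) (hφ0 _) ?_
    ((1 - t) * (y₀ / f x₀) + t * (y₁ / f x₁)) ?_ ?_
  · rw [div_mul_cancel₀ _ hp0.ne', div_mul_cancel₀ _ hp1.ne'] at key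
    rw [hgeq]
    exact key
  · rcases le_total x₀ x₁ with h | h
    · left
      exact ⟨hfmono _ _ hx₀.1 (by nlinarith), hfmono _ _ hx1 (by nlinarith)⟩
    · right
      exact ⟨hfmono _ _ hx₁.1 (by nlinarith), hfmono _ _ hx1 (by nlinarith)⟩
  · rcases le_total x₀ x₁ with h | h
    · rw [abs_of_nonneg (sub_nonneg.2 (hfmono _ _ hx₀.1 h)), abs_of_nonneg (sub_nonneg.2 h)]
      exact hflip _ _ h hx₁.2
    · rw [abs_sub_comm, abs_sub_comm x₁, abs_of_nonneg (sub_nonneg.2 (hfmono _ _ hx₁.1 h)),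
        abs_of_nonneg (sub_nonneg.2 h)]
      exact hflip _ _ h hx₀.2
  · by_cases hx : (1 - t) * x₀ + t * x₁ ∈ Set.Icc (-k) k
    · have h1 := hflip (-k) _ hx.1 hx2
      have h2 := hx.2
      have h3 : f ((1 - t) * x₀ + t * x₁) ≤ 3 / 2 * k := by
        have h4 := mul_le_mul_of_nonneg_left h2 hk0.le
        have h5 := mul_le_mul_of_nonneg_left hk4.le hk0.le
        linarith
      exact (mul_le_of_le_one_left hpx.le (hφ1 _)).trans h3
    · rw [hφsupp _ hx]
      linarith
  · have : 0 ≤ 1 - t := by linarith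
    positivity
  · have h1 := mul_le_mul_of_nonneg_left hb0 (by linarith : 0 ≤ 1 - t)
    have h2 := mul_le_mul_of_nonneg_left hb1 ht0
    linarith
end

section
/- For every constant H ≥ 0 there exists k₀ > 0 such that the following holds for all ε, k with 0 < ε < k < k₀ and all K ≥ 1. Let [x₀,x₁] ⊆ [−1,1] with x₀ < x₁ and let y : [x₀,x₁] → ℝ be a C² function with 0 ≤ y(x) ≤ f(x), y'(x) ≥ 1/4 and |y''(x)| ≤ H·k/f(x) for every x ∈ [x₀,x₁]. Then, writing log m(x, y(x)) = −log f(x) − K·(y(x)/f(x))², one has log m((x₀+x₁)/2, y((x₀+x₁)/2)) ≥ (1/2)·log m(x₀, y(x₀)) + (1/2)·log m(x₁, y(x₁)) + K·(x₁−x₀)²/(128·f(x₁)²). -/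
lemma aux_pointwise (H k K F p q u Y Z : ℝ) (hH : 0 ≤ H) (hk : 0 < k)
    (hk0 : k * (16 * (9 + 2 * H)) < 1) (hK : 1 ≤ K) (hF : 0 < F) (hF3 : F ≤ 3 * k)
    (hp0 : 0 ≤ p) (hpk : p ≤ k) (hq0 : 0 ≤ q) (hq1 : q ≤ 1) (hu0 : 0 ≤ u) (hu1 : u ≤ 1)
    (hY : 1 / 4 ≤ Y) (hZ : |Z| * F ≤ H * k) :
    -(F * q) + p ^ 2 - K * (2 * Y ^ 2 - 8 * u * Y * p + 6 * u ^ 2 * p ^ 2 + 2 * u * F * Z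
      - 2 * u ^ 2 * F * q) ≤ -(K / 16) := by
  have hk1 : k ≤ 1 / 144 := by nlinarith [mul_nonneg hk.le hH]
  have h1 : u * Y * p ≤ Y * k := by
    have : u * p ≤ 1 * k := mul_le_mul hu1 hpk hp0 (by norm_num)
    nlinarith
  have h2 : -(H * k) ≤ u * F * Z := by
    have a : -(|Z| * F) ≤ F * Z := by nlinarith [neg_abs_le Z]
    have b : 0 ≤ |Z| * F := by positivity
    nlinarith
  have h3 : u ^ 2 * F * q ≤ 3 * k := by
    have a : u ^ 2 ≤ 1 := by nlinarith
    have b : F * q ≤ 3 * k := by nlinarith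
    have c : 0 ≤ F * q := by positivity
    nlinarith
  have h4 : 1 / 8 - 2 * k ≤ 2 * Y ^ 2 - 8 * (Y * k) := by nlinarith
  have h5 : 0 ≤ u ^ 2 * p ^ 2 := by positivity
  have h6 : p ^ 2 ≤ k := by nlinarith
  have h7 : 1 / 16 + k ≤ 2 * Y ^ 2 - 8 * u * Y * p + 6 * u ^ 2 * p ^ 2 + 2 * u * F * Z
      - 2 * u ^ 2 * F * q := by nlinarith
  have h8 : 0 ≤ F * q := by positivity
  nlinarith

theorem stmt_3 :
    ∀ H : ℝ, 0 ≤ H → ∃ k₀ > (0 : ℝ), ∀ ε k K : ℝ, 0 < ε → ε < k → k < k₀ → 1 ≤ K →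
    ∀ φ : ℝ → ℝ, Continuous φ → (∀ x, 0 ≤ φ x) → (∀ x, φ x ≤ 1) →
      (∀ x, x ∉ Set.Icc (-k) k → φ x = 0) → (∫ x, φ x) = k →
    ∀ f f' : ℝ → ℝ, (∀ x, HasDerivAt f (f' x) x) → (∀ x, HasDerivAt f' (φ x) x) →
      f' (-1) = 0 → f (-1) = ε →
    ∀ x₀ x₁ : ℝ, x₀ < x₁ → Set.Icc x₀ x₁ ⊆ Set.Icc (-1 : ℝ) 1 →
    ∀ y y' y'' : ℝ → ℝ,
      (∀ x ∈ Set.Icc x₀ x₁, HasDerivAt y (y' x) x) →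
      (∀ x ∈ Set.Icc x₀ x₁, HasDerivAt y' (y'' x) x) →
      (∀ x ∈ Set.Icc x₀ x₁, 0 ≤ y x ∧ y x ≤ f x) →
      (∀ x ∈ Set.Icc x₀ x₁, 1 / 4 ≤ y' x) →
      (∀ x ∈ Set.Icc x₀ x₁, |y'' x| ≤ H * k / f x) →
      -Real.log (f ((x₀ + x₁) / 2)) - K * (y ((x₀ + x₁) / 2) / f ((x₀ + x₁) / 2)) ^ 2 ≥
        (1 / 2) * (-Real.log (f x₀) - K * (y x₀ / f x₀) ^ 2) +
        (1 / 2) * (-Real.log (f x₁) - K * (y x₁ / f x₁) ^ 2) +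
        K * (x₁ - x₀) ^ 2 / (128 * (f x₁) ^ 2) := by
  intro H hH
  refine ⟨1 / (16 * (9 + 2 * H)), by positivity, ?_⟩
  intro ε k K hε hεk hk0 hK φ hφc hφ0 hφ1 _ hφk f f' hf hf' hf'1 hf1 x₀ x₁ hx hsub y y' y''
    hy hy' hyf hy4 hyH
  have hk : 0 < k := hε.trans hεk
  have hk0' : k * (16 * (9 + 2 * H)) < 1 := by
    rwa [lt_div_iff₀ (by positivity)] at hk0
  have hφint : MeasureTheory.Integrable φ := by
    by_contra h
    rw [MeasureTheory.integral_undef h] at hφk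
    linarith
  have hmono : Monotone f' := monotone_of_hasDerivAt_nonneg hf' hφ0
  have hp0 : ∀ x, -1 ≤ x → 0 ≤ f' x := fun x h => hf'1 ▸ hmono h
  have hpk : ∀ x, -1 ≤ x → f' x ≤ k := by
    intro x h
    have e : ∫ t in (-1)..x, φ t = f' x - f' (-1) :=
      intervalIntegral.integral_eq_sub_of_hasDerivAt (fun t _ => hf' t)
        (hφc.intervalIntegrable _ _)
    rw [hf'1, sub_zero, intervalIntegral.integral_of_le h] at e
    rw [← e, ← hφk]
    exact MeasureTheory.setIntegral_le_integral hφint (Filter.Eventually.of_forall hφ0)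
  have hfmono : MonotoneOn f (Set.Ici (-1)) := by
    apply monotoneOn_of_hasDerivWithinAt_nonneg (convex_Ici _)
      (fun x _ => (hf x).continuousAt.continuousWithinAt)
      (fun x _ => (hf x).hasDerivWithinAt)
    intro x h
    exact hp0 x (interior_subset h)
  have hfpos : ∀ x, -1 ≤ x → 0 < f x := fun x h => by
    have := hfmono (Set.mem_Ici.2 le_rfl) h h
    linarith
  have hf3 : ∀ x, -1 ≤ x → x ≤ 1 → f x ≤ 3 * k := by
    intro x h h1
    have hm : AntitoneOn (fun x => f x - k * x) (Set.Ici (-1)) := by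
      apply antitoneOn_of_hasDerivWithinAt_nonpos (f' := fun x => f' x - k) (convex_Ici _)
      · exact fun x _ => ((hf x).continuousAt.sub (by fun_prop)).continuousWithinAt
      · intro x _
        exact (((hf x).sub ((hasDerivAt_id x).const_mul k)).congr_deriv (by simp)).hasDerivWithinAt
      · intro x h
        have := hpk x (interior_subset h)
        linarith
    have := hm (Set.mem_Ici.2 le_rfl) h h
    simp only at this
    nlinarith
  have hI : ∀ x ∈ Set.Icc x₀ x₁, -1 ≤ x ∧ x ≤ 1 := fun x h => hsub h
  have hx1m : x₁ ∈ Set.Icc x₀ x₁ := ⟨hx.le, le_rfl⟩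
  have hx0m : x₀ ∈ Set.Icc x₀ x₁ := ⟨le_rfl, hx.le⟩
  have hF1 : 0 < f x₁ := hfpos _ (hI _ hx1m).1
  set c : ℝ := K / (16 * f x₁ ^ 2) with hc
  let G : ℝ → ℝ := fun x => -Real.log (f x) - K * (y x / f x) ^ 2 + c / 2 * x ^ 2
  let G1 : ℝ → ℝ := fun x => -(f' x / f x)
    - K * (2 * (y x / f x) * ((y' x * f x - y x * f' x) / f x ^ 2)) + c * x
  let G2 : ℝ → ℝ := fun x => (-(f x * φ x) + f' x ^ 2 - K * (2 * y' x ^ 2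
      - 8 * (y x / f x) * y' x * f' x + 6 * (y x / f x) ^ 2 * f' x ^ 2
      + 2 * (y x / f x) * f x * y'' x - 2 * (y x / f x) ^ 2 * f x * φ x)) / f x ^ 2 + c
  have hG : ∀ x ∈ Set.Icc x₀ x₁, HasDerivAt G (G1 x) x := by
    intro x h
    have hne := (hfpos x (hI x h).1).ne'
    have hu := (hy x h).div (hf x) hne
    refine (((((hf x).log hne).neg).sub ((hu.pow 2).const_mul K)).add
      (((hasDerivAt_id x).pow 2).const_mul (c / 2))).congr_deriv ?_
    simp only [G1, id, Pi.div_apply]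
    norm_num
    ring
  have hG1 : ∀ x ∈ Set.Icc x₀ x₁, HasDerivAt G1 (G2 x) x := by
    intro x h
    have hne := (hfpos x (hI x h).1).ne'
    have hu := (hy x h).div (hf x) hne
    have hv := (((hy' x h).mul (hf x)).sub ((hy x h).mul (hf' x))).div ((hf x).pow 2)
      (pow_ne_zero 2 hne)
    refine ((((hf' x).div (hf x) hne).neg.sub (((hu.const_mul 2).mul hv).const_mul K)).add
      ((hasDerivAt_id x).const_mul c)).congr_deriv ?_
    simp only [G2, Pi.div_apply, Pi.mul_apply, Pi.sub_apply, Pi.pow_apply]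
    field_simp
    ring
  have hG2 : ∀ x ∈ Set.Icc x₀ x₁, G2 x ≤ 0 := by
    intro x h
    have hF := hfpos x (hI x h).1
    have hle : f x ≤ f x₁ := hfmono (hI x h).1 (hI _ hx1m).1 h.2
    have key := aux_pointwise H k K (f x) (f' x) (φ x) (y x / f x) (y' x) (y'' x) hH hk hk0' hK hF
      (hf3 x (hI x h).1 (hI x h).2) (hp0 x (hI x h).1) (hpk x (hI x h).1) (hφ0 x) (hφ1 x)
      (div_nonneg (hyf x h).1 hF.le) ((div_le_one hF).2 (hyf x h).2) (hy4 x h)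
      ((le_div_iff₀ hF).1 (hyH x h))
    have e1 := div_le_div_of_nonneg_right key (sq_nonneg (f x))
    have e2 : c ≤ K / 16 / f x ^ 2 := by
      rw [hc, div_div]
      gcongr
    rw [neg_div] at e1
    simp only [G2]
    linarith
  have hconc : ConcaveOn ℝ (Set.Icc x₀ x₁) G := by
    apply concaveOn_of_hasDerivWithinAt2_nonpos (f' := G1) (f'' := G2) (convex_Icc _ _)
    · exact fun x h => (hG x h).continuousAt.continuousWithinAt
    · exact fun x h => (hG x (interior_subset h)).hasDerivWithinAt
    · exact fun x h => (hG1 x (interior_subset h)).hasDerivWithinAt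
    · exact fun x h => hG2 x (interior_subset h)
  have hmid := hconc.2 hx0m hx1m (show (0 : ℝ) ≤ 1 / 2 by norm_num)
    (show (0 : ℝ) ≤ 1 / 2 by norm_num) (by norm_num)
  have hm : (1 / 2 : ℝ) • x₀ + (1 / 2 : ℝ) • x₁ = (x₀ + x₁) / 2 := by
    simp only [smul_eq_mul]; ring
  rw [hm] at hmid
  simp only [G, smul_eq_mul] at hmid
  have e : K * (x₁ - x₀) ^ 2 / (128 * f x₁ ^ 2) = c * (x₁ - x₀) ^ 2 / 8 := by
    rw [hc]; field_simp; ring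
  rw [e]
  have e3 : c * (x₁ - x₀) ^ 2 / 8 = 1 / 2 * (c / 2 * x₀ ^ 2) + 1 / 2 * (c / 2 * x₁ ^ 2)
    - c / 2 * ((x₀ + x₁) / 2) ^ 2 := by ring
  rw [e3]
  linarith
end

section
/- For every constant H ≥ 0 there exists k₀ > 0 such that the following holds for all ε, k with 0 < ε < k < k₀ and all K ≥ 1. Let [x₀,x₁] ⊆ [−1,1] with x₀ < x₁ and let y : [x₀,x₁] → ℝ be a C² function with 0 ≤ y(x) ≤ f(x), y'(x) ≥ 1/4 and |y''(x)| ≤ H·k/f(x) for every x ∈ [x₀,x₁]. Then K·(y((x₀+x₁)/2)/f((x₀+x₁)/2))² ≤ (K/2)·(y(x₀)/f(x₀))² + (K/2)·(y(x₁)/f(x₁))² − K·(x₁−x₀)²/(128·f(x₁)²). -/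
theorem stmt_4 :
    ∀ H : ℝ, 0 ≤ H → ∃ k₀ > (0 : ℝ), ∀ ε k K : ℝ, 0 < ε → ε < k → k < k₀ → 1 ≤ K →
    ∀ φ : ℝ → ℝ, Continuous φ → (∀ x, 0 ≤ φ x) → (∀ x, φ x ≤ 1) →
      (∀ x, x ∉ Set.Icc (-k) k → φ x = 0) → (∫ x, φ x) = k →
    ∀ f f' : ℝ → ℝ, (∀ x, HasDerivAt f (f' x) x) → (∀ x, HasDerivAt f' (φ x) x) →
      f' (-1) = 0 → f (-1) = ε →
    ∀ x₀ x₁ : ℝ, x₀ < x₁ → Set.Icc x₀ x₁ ⊆ Set.Icc (-1 : ℝ) 1 →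
    ∀ y y' y'' : ℝ → ℝ,
      (∀ x ∈ Set.Icc x₀ x₁, HasDerivAt y (y' x) x) →
      (∀ x ∈ Set.Icc x₀ x₁, HasDerivAt y' (y'' x) x) →
      (∀ x ∈ Set.Icc x₀ x₁, 0 ≤ y x ∧ y x ≤ f x) →
      (∀ x ∈ Set.Icc x₀ x₁, 1 / 4 ≤ y' x) →
      (∀ x ∈ Set.Icc x₀ x₁, |y'' x| ≤ H * k / f x) →
      K * (y ((x₀ + x₁) / 2) / f ((x₀ + x₁) / 2)) ^ 2 ≤
        (K / 2) * (y x₀ / f x₀) ^ 2 + (K / 2) * (y x₁ / f x₁) ^ 2 -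
        K * (x₁ - x₀) ^ 2 / (128 * (f x₁) ^ 2) := by
  intro H hH
  refine ⟨1 / (32 * (H + 4)), by positivity, ?_⟩
  intro ε k K hε hεk hk hK φ hφc hφ0 hφ1 hφs hφi f f' hf hf' hf'0 hf0 x₀ x₁ hx hsub y y' y'' hy hy' hyf hy4 hyH
  have hk0 : 0 < k := hε.trans hεk
  have hkH : k * (32 * (H + 4)) < 1 := by
    rwa [lt_div_iff₀ (by positivity)] at hk
  have hφint : MeasureTheory.Integrable φ := by
    apply hφc.integrable_of_hasCompactSupport
    exact HasCompactSupport.intro isCompact_Icc hφs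
  have hf'mono : Monotone f' :=
    monotone_of_hasDerivAt_nonneg hf' hφ0
  have hf'nn : ∀ x, -1 ≤ x → 0 ≤ f' x := fun x h => hf'0 ▸ hf'mono h
  have hf'k : ∀ x, -1 ≤ x → f' x ≤ k := by
    intro x h
    have h1 : ∫ t in (-1 : ℝ)..x, φ t = f' x - f' (-1) :=
      intervalIntegral.integral_eq_sub_of_hasDerivAt (fun t _ => hf' t)
        (hφc.intervalIntegrable _ _)
    rw [intervalIntegral.integral_of_le h, hf'0, sub_zero] at h1
    rw [← h1, ← hφi]
    exact MeasureTheory.setIntegral_le_integral hφint (Filter.Eventually.of_forall hφ0)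
  have hfd : Differentiable ℝ f := fun x => (hf x).differentiableAt
  have hfmono : MonotoneOn f (Set.Ici (-1)) := by
    apply monotoneOn_of_deriv_nonneg (convex_Ici _) hfd.continuous.continuousOn
      hfd.differentiableOn
    intro x hx
    rw [interior_Ici] at hx
    rw [(hf x).deriv]
    exact hf'nn x (le_of_lt hx)
  have hfε : ∀ x, -1 ≤ x → ε ≤ f x := fun x h =>
    hf0 ▸ hfmono (Set.mem_Ici.2 le_rfl) (Set.mem_Ici.2 h) h
  have hf3k : ∀ x, -1 ≤ x → x ≤ 1 → f x ≤ 3 * k := by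
    intro x h h'
    have h1 := (convex_Ici (-1 : ℝ)).image_sub_le_mul_sub_of_deriv_le
      hfd.continuous.continuousOn hfd.differentiableOn (C := k) (by
        intro z hz
        rw [interior_Ici] at hz
        rw [(hf z).deriv]
        exact hf'k z (le_of_lt hz)) (-1) (Set.mem_Ici.2 le_rfl) x (Set.mem_Ici.2 h) h
    rw [hf0] at h1
    nlinarith
  have hx0 := hsub (Set.left_mem_Icc.2 hx.le)
  have hx1 := hsub (Set.right_mem_Icc.2 hx.le)
  have hf1 : 0 < f x₁ := hε.trans_le (hfε _ hx1.1)
  set m : ℝ := 1 / (16 * f x₁ ^ 2) with hm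
  have hconv : ConvexOn ℝ (Set.Icc x₀ x₁) (fun x => (y x / f x) ^ 2 - m / 2 * x ^ 2) := by
    have hd1 : ∀ x ∈ Set.Icc x₀ x₁, HasDerivAt (fun x => (y x / f x) ^ 2 - m / 2 * x ^ 2)
        (2 * (y x / f x) * ((y' x * f x - y x * f' x) / f x ^ 2) - m * x) x := by
      intro x hxx
      have hfp : f x ≠ 0 := (hε.trans_le (hfε _ (hsub hxx).1)).ne'
      have := (((hy x hxx).div (hf x) hfp).pow 2).sub (((hasDerivAt_id x).pow 2).const_mul (m / 2))
      refine this.congr_deriv ?_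
      simp
      ring
    have hd2 : ∀ x ∈ Set.Icc x₀ x₁, HasDerivAt
        (fun x => 2 * (y x / f x) * ((y' x * f x - y x * f' x) / f x ^ 2) - m * x)
        (2 / f x ^ 2 * ((y' x - y x / f x * f' x) ^ 2 + y x / f x *
          (f x * y'' x - 2 * y' x * f' x - y x / f x * f x * φ x + 2 * (y x / f x) * f' x ^ 2)) - m) x := by
      intro x hxx
      have hfp : f x ≠ 0 := (hε.trans_le (hfε _ (hsub hxx).1)).ne'
      have := ((((hy x hxx).div (hf x) hfp).const_mul 2).mul
        ((((hy' x hxx).mul (hf x)).sub ((hy x hxx).mul (hf' x))).div ((hf x).pow 2)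
          (pow_ne_zero 2 hfp))).sub ((hasDerivAt_id x).const_mul m)
      refine this.congr_deriv ?_
      simp
      field_simp
      ring
    refine convexOn_of_hasDerivWithinAt2_nonneg (convex_Icc _ _)
      (fun x hxx => (hd1 x hxx).continuousAt.continuousWithinAt)
      (fun x hxx => (hd1 x (interior_subset hxx)).hasDerivWithinAt)
      (fun x hxx => (hd2 x (interior_subset hxx)).hasDerivWithinAt) ?_
    intro x hxi
    have hxx := interior_subset hxi
    have hxb := hsub hxx
    have hfp : 0 < f x := hε.trans_le (hfε _ hxb.1)
    have hfle : f x ≤ f x₁ := hfmono hxb.1 hx1.1 hxx.2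
    have a1 := hf'nn x hxb.1
    have a2 := hf'k x hxb.1
    have a3 := hf3k x hxb.1 hxb.2
    have a4 := hy4 x hxx
    have a5 : -(H * k) ≤ f x * y'' x := by
      have h1 := (abs_le.1 (hyH x hxx)).1
      have h2 := mul_le_mul_of_nonneg_left h1 hfp.le
      have h3 : f x * -(H * k / f x) = -(H * k) := by field_simp
      linarith
    have u0 : 0 ≤ y x / f x := div_nonneg (hyf x hxx).1 hfp.le
    have u1 : y x / f x ≤ 1 := (div_le_one hfp).2 (hyf x hxx).2
    have p0 := hφ0 x
    have p1 := hφ1 x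
    have hm' : m ≤ 1 / (16 * f x ^ 2) := by
      rw [hm]; gcongr
    generalize y x / f x = u at *
    have key : 1 / 32 ≤ (y' x - u * f' x) ^ 2 + u *
          (f x * y'' x - 2 * y' x * f' x - u * f x * φ x + 2 * u * f' x ^ 2) := by
      have hHk : 0 ≤ H * k := by positivity
      have e1 : -(H * k) ≤ u * (f x * y'' x) := by nlinarith
      have e2 : u * f' x ≤ k := by nlinarith
      have e3 : u * u * (f x * φ x) ≤ 3 * k := by
        have : f x * φ x ≤ 3 * k := by nlinarith
        have h2 : u * u ≤ 1 := by nlinarith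
        have h3 : 0 ≤ f x * φ x := by positivity
        nlinarith
      have e4 : y' x * (u * f' x) ≤ y' x * k := mul_le_mul_of_nonneg_left e2 (by linarith)
      have e5 : 1 / 4 * (1 / 4 - 4 * k) ≤ y' x * (y' x - 4 * k) := by
        apply mul_le_mul a4 (by linarith) (by nlinarith) (by linarith)
      nlinarith [sq_nonneg (u * f' x)]
    have : 1 / (16 * f x ^ 2) = 2 / f x ^ 2 * (1 / 32) := by field_simp; norm_num
    have h9 := mul_le_mul_of_nonneg_left key (show 0 ≤ 2 / f x ^ 2 by positivity)
    linarith
  have hmid := hconv.2 (Set.left_mem_Icc.2 hx.le) (Set.right_mem_Icc.2 hx.le)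
    (show (0 : ℝ) ≤ 1 / 2 by norm_num) (show (0 : ℝ) ≤ 1 / 2 by norm_num) (by norm_num)
  simp only [smul_eq_mul] at hmid
  rw [show 1 / 2 * x₀ + 1 / 2 * x₁ = (x₀ + x₁) / 2 by ring] at hmid
  have hfin : (y ((x₀ + x₁) / 2) / f ((x₀ + x₁) / 2)) ^ 2 ≤
      1 / 2 * (y x₀ / f x₀) ^ 2 + 1 / 2 * (y x₁ / f x₁) ^ 2 - m / 8 * (x₁ - x₀) ^ 2 := by
    nlinarith
  have hlast := mul_le_mul_of_nonneg_left hfin (show 0 ≤ K by linarith)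
  have hE : K * (x₁ - x₀) ^ 2 / (128 * f x₁ ^ 2) = K * (m / 8 * (x₁ - x₀) ^ 2) := by
    rw [hm]; field_simp; ring
  rw [hE]
  linarith
end

section
/- Let x ∈ [−1,1] and δ > 0 be such that x−δ ∈ [−1,1] and x+δ ∈ [−1,1]. Then |f(x)/f(x−δ) + f(x)/f(x+δ) − 2| ≤ (2k² + f(x))·δ² / (f(x−δ)·f(x+δ)). -/
theorem stmt_5 (ε k : ℝ) (hε : 0 < ε) (hεk : ε < k) (hk : k < 1 / 2)
    (φ : ℝ → ℝ) (hφc : Continuous φ) (hφ0 : ∀ x, 0 ≤ φ x) (hφ1 : ∀ x, φ x ≤ 1)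
    (hφsupp : ∀ x, x ∉ Set.Icc (-k) k → φ x = 0)
    (hφint : (∫ x, φ x) = k)
    (f f' : ℝ → ℝ)
    (hfd : ∀ x, HasDerivAt f (f' x) x)
    (hfd2 : ∀ x, HasDerivAt f' (φ x) x)
    (hf'm1 : f' (-1) = 0) (hfm1 : f (-1) = ε)
    (x δ : ℝ) (hx : x ∈ Set.Icc (-1 : ℝ) 1) (hδ : 0 < δ)
    (hxm : x - δ ∈ Set.Icc (-1 : ℝ) 1) (hxp : x + δ ∈ Set.Icc (-1 : ℝ) 1) :
    |f x / f (x - δ) + f x / f (x + δ) - 2| ≤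
      (2 * k ^ 2 + f x) * δ ^ 2 / (f (x - δ) * f (x + δ)) := by
  have hint : MeasureTheory.Integrable φ := by
    by_contra h
    rw [MeasureTheory.integral_undef h] at hφint
    linarith
  have hm : Monotone f' := monotone_of_deriv_nonneg (fun u => (hfd2 u).differentiableAt)
    (fun u => by rw [(hfd2 u).deriv]; exact hφ0 u)
  have hm2 : Monotone (fun u => u - f' u) := by
    have hd : ∀ u, HasDerivAt (fun u => u - f' u) (1 - φ u) u :=
      fun u => (hasDerivAt_id' u).sub (hfd2 u)
    exact monotone_of_deriv_nonneg (fun u => (hd u).differentiableAt)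
      (fun u => by rw [(hd u).deriv]; linarith [hφ1 u])
  have hk' : ∀ u, f' u ≤ k := by
    intro u
    rcases le_total u (-1) with h | h
    · linarith [hm h]
    · have h1 : ∫ t in (-1)..u, φ t = f' u - f' (-1) :=
        intervalIntegral.integral_eq_sub_of_hasDerivAt (fun t _ => hfd2 t)
          (hφc.intervalIntegrable _ _)
      rw [intervalIntegral.integral_of_le h] at h1
      have h2 := MeasureTheory.setIntegral_le_integral (s := Set.Ioc (-1) u) hint
        (Filter.Eventually.of_forall hφ0)
      linarith
  have hmk : Monotone (fun u => k * u - f u) := by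
    have hd : ∀ u, HasDerivAt (fun u => k * u - f u) (k * 1 - f' u) u :=
      fun u => ((hasDerivAt_id' u).const_mul k).sub (hfd u)
    exact monotone_of_deriv_nonneg (fun u => (hd u).differentiableAt)
      (fun u => by rw [(hd u).deriv]; linarith [hk' u])
  have hfc : Continuous f := continuous_iff_continuousAt.2 fun u => (hfd u).continuousAt
  have hfm : MonotoneOn f (Set.Ici (-1)) := by
    refine monotoneOn_of_deriv_nonneg (convex_Ici _) hfc.continuousOn
      (fun u _ => (hfd u).differentiableAt.differentiableWithinAt) ?_
    intro u hu
    rw [interior_Ici] at hu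
    rw [(hfd u).deriv, ← hf'm1]
    exact hm (le_of_lt hu)
  have hcv : ConvexOn ℝ Set.univ f := by
    refine Monotone.convexOn_univ_of_deriv (fun u => (hfd u).differentiableAt) ?_
    rwa [show deriv f = f' from funext fun u => (hfd u).deriv]
  have hcv2 : ConvexOn ℝ Set.univ (fun u => u ^ 2 / 2 - f u) := by
    have hd : ∀ u, HasDerivAt (fun u => u ^ 2 / 2 - f u) (u - f' u) u := by
      intro u
      have := ((hasDerivAt_pow 2 u).div_const 2).sub (hfd u)
      have e2 : ((2 : ℕ) : ℝ) * u ^ (2 - 1) / 2 - f' u = u - f' u := by norm_num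
      rw [e2] at this
      exact this
    refine Monotone.convexOn_univ_of_deriv (fun u => (hd u).differentiableAt) ?_
    rwa [show deriv (fun u => u ^ 2 / 2 - f u) = fun u => u - f' u from
      funext fun u => (hd u).deriv]
  have e : (1/2 : ℝ) * (x - δ) + (1/2) * (x + δ) = x := by ring
  have c1 := hcv.2 (Set.mem_univ (x - δ)) (Set.mem_univ (x + δ))
    (show (0:ℝ) ≤ 1/2 by norm_num) (show (0:ℝ) ≤ 1/2 by norm_num) (by norm_num)
  have c2 := hcv2.2 (Set.mem_univ (x - δ)) (Set.mem_univ (x + δ))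
    (show (0:ℝ) ≤ 1/2 by norm_num) (show (0:ℝ) ≤ 1/2 by norm_num) (by norm_num)
  simp only [smul_eq_mul] at c1 c2
  rw [e] at c1 c2
  have m1 : f (x - δ) ≤ f x := hfm hxm.1 hx.1 (by linarith)
  have m2 : f x ≤ f (x + δ) := hfm hx.1 hxp.1 (by linarith)
  have m0 : f (-1) ≤ f (x - δ) := hfm Set.self_mem_Ici hxm.1 hxm.1
  have k1 : k * (x - δ) - f (x - δ) ≤ k * x - f x := hmk (show x - δ ≤ x by linarith)
  have k2 : k * x - f x ≤ k * (x + δ) - f (x + δ) := hmk (show x ≤ x + δ by linarith)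
  generalize f (x - δ) = a at *
  generalize f (x + δ) = b at *
  generalize f x = c at *
  have ha : 0 < a := by linarith
  have hb : 0 < b := by linarith
  have hc : 0 < c := by linarith
  have hs0 : 0 ≤ a + b - 2 * c := by linarith
  have hs1 : a + b - 2 * c ≤ δ ^ 2 := by nlinarith
  have hp : (c - a) * (b - c) ≤ (k * δ) * (k * δ) :=
    mul_le_mul (by linarith) (by linarith) (by linarith) (by nlinarith)
  have hp0 : 0 ≤ (c - a) * (b - c) := mul_nonneg (by linarith) (by linarith)
  have hcs : c * (a + b - 2 * c) ≤ c * δ ^ 2 := mul_le_mul_of_nonneg_left hs1 hc.le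
  have hcs0 : 0 ≤ c * (a + b - 2 * c) := mul_nonneg hc.le hs0
  have hkd : 0 ≤ (k * δ) * (k * δ) := mul_self_nonneg _
  have hcd : 0 ≤ c * δ ^ 2 := by positivity
  have key : c / a + c / b - 2
      = (2 * ((c - a) * (b - c)) - c * (a + b - 2 * c)) / (a * b) := by
    field_simp
    ring
  rw [key, abs_div, abs_of_pos (mul_pos ha hb)]
  refine div_le_div_of_nonneg_right ?_ (mul_pos ha hb).le
  rw [abs_le]
  constructor <;> nlinarith
end

section
/- Let μ₀, μ₁ be Borel probability measures on ℝ², absolutely continuous with respect to the 2-dimensional Lebesgue measure, with densities ρ₀ and ρ₁. Let T = (T₁,T₂) : ℝ² → ℝ² be a Borel map with T_#μ₀ = μ₁ which is injective outside a μ₀-null set. Assume: (i) for μ₀-almost every (x,y) there is a neighborhood of (x,y) on which T₁ does not depend on the y-coordinate; (ii) for every y, the map x ↦ T₁(x,y) is nondecreasing; (iii) for every x, the map y ↦ T₂(x,y) is nondecreasing. Then for μ₀-almost every (x,y) the partial derivatives ∂T₁/∂x and ∂T₂/∂y exist at (x,y) and the Jacobi equation ρ₁(T(x,y)) · (∂T₁/∂x)(x,y)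 · (∂T₂/∂y)(x,y) = ρ₀(x,y) holds. -/
open MeasureTheory

open Filter Topology Set in
lemma aux_inj {f : ℝ → ℝ} (hf : Monotone f) {x x' : ℝ} (hd : deriv f x ≠ 0) (h : f x = f x') :
    x = x' := by
  by_contra hne
  have hD : HasDerivAt f (deriv f x) x := (differentiableAt_of_deriv_ne_zero hd).hasDerivAt
  rcases lt_or_gt_of_ne hne with hlt | hlt
  · have h1 : HasDerivWithinAt f 0 (Ioi x) x := by
      refine (hasDerivWithinAt_const x (Ioi x) (f x)).congr_of_eventuallyEq ?_ rfl
      filter_upwards [Ioc_mem_nhdsGT hlt] with t ht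
      exact le_antisymm (h ▸ hf ht.2) (hf ht.1.le)
    exact hd ((uniqueDiffWithinAt_Ioi x).eq_deriv _ hD.hasDerivWithinAt h1)
  · have h1 : HasDerivWithinAt f 0 (Iio x) x := by
      refine (hasDerivWithinAt_const x (Iio x) (f x)).congr_of_eventuallyEq ?_ rfl
      filter_upwards [Ico_mem_nhdsLT hlt] with t ht
      exact le_antisymm (hf ht.2.le) (h ▸ hf ht.1)
    exact hd ((uniqueDiffWithinAt_Iio x).eq_deriv _ hD.hasDerivWithinAt h1)

open Filter Topology Set in
lemma aux_hasDeriv_iff {φ : ℝ → ℝ} (hφ : Monotone φ) (c y : ℝ) :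
    HasDerivAt φ c y ↔ ∀ n : ℕ, ∃ m : ℕ, ∀ r : ℚ, |(r : ℝ)| < 1 / ((m : ℝ) + 1) →
      |φ (y + r) - φ y - r * c| ≤ 1 / ((n : ℝ) + 1) * |(r : ℝ)| := by
  rw [hasDerivAt_iff_isLittleO_nhds_zero, Asymptotics.isLittleO_iff]
  constructor
  · intro h n
    have := h (c := 1 / ((n : ℝ) + 1)) (by positivity)
    rw [Metric.eventually_nhds_iff] at this
    obtain ⟨ε, hε, H⟩ := this
    obtain ⟨m, hm⟩ := exists_nat_one_div_lt hε
    refine ⟨m, fun r hr => ?_⟩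
    have := @H (r : ℝ) (by rw [Real.dist_eq, sub_zero]; exact hr.trans hm)
    rwa [Real.norm_eq_abs, Real.norm_eq_abs, smul_eq_mul] at this
  · intro h ε hε
    obtain ⟨n, hn⟩ := exists_nat_one_div_lt hε
    obtain ⟨m, hm⟩ := h n
    set e : ℝ := 1 / ((n : ℝ) + 1) with he
    have he0 : 0 < e := by positivity
    set d : ℝ := 1 / ((m : ℝ) + 1) with hd
    have hd0 : 0 < d := by positivity
    rw [Metric.eventually_nhds_iff]
    refine ⟨d, hd0, fun t ht => ?_⟩
    rw [Real.dist_eq, sub_zero] at ht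
    rw [Real.norm_eq_abs, Real.norm_eq_abs, smul_eq_mul]
    refine le_trans ?_ (mul_le_mul_of_nonneg_right hn.le (abs_nonneg t))
    -- upper and lower bound by continuity
    have hopen : IsOpen {s : ℝ | |s| < d} := isOpen_lt continuous_abs continuous_const
    have up : φ (y + t) - φ y - t * c ≤ e * |t| := by
      by_contra hc
      push Not at hc
      have hcont : Continuous fun s : ℝ => φ (y + t) - φ y - s * c - e * |s| := by fun_prop
      have hO : IsOpen ({s : ℝ | |s| < d} ∩ {s | 0 < φ (y + t) - φ y - s * c - e * |s|}) :=
        hopen.inter (isOpen_lt continuous_const hcont)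
      have hmem : ({s : ℝ | |s| < d} ∩ {s | 0 < φ (y + t) - φ y - s * c - e * |s|}) ∈ 𝓝 t :=
        hO.mem_nhds ⟨ht, by simp only [mem_ofPred_eq]; linarith⟩
      obtain ⟨u, hu, hsub⟩ := exists_Ico_subset_of_mem_nhds hmem ⟨t + 1, by linarith⟩
      obtain ⟨r, hr1, hr2⟩ := exists_rat_btwn hu
      have hr := hsub ⟨hr1.le, hr2⟩
      have h1 := (abs_le.1 (hm r hr.1)).2
      have h2 := hr.2
      simp only [mem_ofPred_eq] at h2
      have h3 : φ (y + t) ≤ φ (y + r) := hφ (by linarith)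
      linarith
    have lo : -(e * |t|) ≤ φ (y + t) - φ y - t * c := by
      by_contra hc
      push Not at hc
      have hcont : Continuous fun s : ℝ => φ (y + t) - φ y - s * c + e * |s| := by fun_prop
      have hO : IsOpen ({s : ℝ | |s| < d} ∩ {s | φ (y + t) - φ y - s * c + e * |s| < 0}) :=
        hopen.inter (isOpen_lt hcont continuous_const)
      have hmem : ({s : ℝ | |s| < d} ∩ {s | φ (y + t) - φ y - s * c + e * |s| < 0}) ∈ 𝓝 t :=
        hO.mem_nhds ⟨ht, by simp only [mem_ofPred_eq]; linarith⟩
      obtain ⟨u, hu, hsub⟩ := exists_Ioc_subset_of_mem_nhds hmem ⟨t - 1, by linarith⟩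
      obtain ⟨r, hr1, hr2⟩ := exists_rat_btwn hu
      have hr := hsub ⟨hr1, hr2.le⟩
      have h1 := (abs_le.1 (hm r hr.1)).1
      have h2 := hr.2
      simp only [mem_ofPred_eq] at h2
      have h3 : φ (y + r) ≤ φ (y + t) := hφ (by linarith)
      linarith
    exact abs_le.2 ⟨lo, up⟩

open Filter Topology Set in
/-- Measurable version of the partial derivative in the second variable. -/
lemma aux_param {g : ℝ × ℝ → ℝ} (hg : Measurable g) (hmono : ∀ x, Monotone fun y => g (x, y)) :
    ∃ b : ℝ × ℝ → ℝ, Measurable b ∧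
      MeasurableSet {z : ℝ × ℝ | HasDerivAt (fun y => g (z.1, y)) (b z) z.2} ∧
      ∀ᵐ z : ℝ × ℝ, HasDerivAt (fun y => g (z.1, y)) (b z) z.2 := by
  let b : ℝ × ℝ → ℝ := fun z => limsup (fun n : ℕ =>
    (1 / ((n : ℝ) + 1))⁻¹ * (g (z.1, z.2 + 1 / ((n : ℝ) + 1)) - g (z.1, z.2))) atTop
  have hb : Measurable b := by
    refine Measurable.limsup fun n => ?_
    fun_prop
  have hM : MeasurableSet {z : ℝ × ℝ | HasDerivAt (fun y => g (z.1, y)) (b z) z.2} := by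
    simp_rw [fun z : ℝ × ℝ => aux_hasDeriv_iff (hmono z.1) (b z) z.2]
    simp only [ofPred_forall, ofPred_exists]
    refine MeasurableSet.iInter fun n => MeasurableSet.iUnion fun m => MeasurableSet.iInter fun r =>
      MeasurableSet.iInter fun _ => ?_
    refine measurableSet_le ?_ measurable_const
    have : Measurable fun z : ℝ × ℝ => g (z.1, z.2 + r) - g (z.1, z.2) - r * b z := by fun_prop
    exact continuous_abs.measurable.comp this
  refine ⟨b, hb, hM, ?_⟩
  rw [Measure.volume_eq_prod, Measure.ae_prod_iff_ae_ae hM]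
  refine Eventually.of_forall fun x => ?_
  filter_upwards [(hmono x).ae_differentiableAt] with y hy
  have h1 := hy.hasDerivAt
  have h2 := h1.tendsto_slope_zero_right
  have h3 : Tendsto (fun n : ℕ => 1 / ((n : ℝ) + 1)) atTop (𝓝[>] 0) :=
    tendsto_nhdsWithin_iff.2 ⟨tendsto_one_div_add_atTop_nhds_zero_nat,
      Eventually.of_forall fun n => by simp only [mem_Ioi]; positivity⟩
  have h4 : b (x, y) = deriv (fun y => g (x, y)) y := (h2.comp h3).limsup_eq
  simpa only [h4] using h1

open Filter Topology Set in
lemma aux_vol {f : ℝ → ℝ} (hf : Monotone f) {b : ℝ × ℝ → ℝ} (hb : Measurable b)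
    {T : ℝ × ℝ → ℝ × ℝ} (hT : Measurable T) {B : Set (ℝ × ℝ)} (hB : MeasurableSet B)
    (hinj : InjOn T B) (hT1 : ∀ z ∈ B, (T z).1 = f z.1)
    (hd1 : ∀ z ∈ B, DifferentiableAt ℝ f z.1)
    (hd2 : ∀ z ∈ B, HasDerivAt (fun y => (T (z.1, y)).2) (b z) z.2) :
    volume (T '' B) = ∫⁻ z in B, ENNReal.ofReal |deriv f z.1| * ENNReal.ofReal |b z| := by
  have hA : MeasurableSet (T '' B) := hB.image_of_measurable_injOn hT hinj
  have hBx : ∀ x, MeasurableSet (Prod.mk x ⁻¹' B) := fun x => measurable_prodMk_left hB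
  set X : Set ℝ := {x | deriv f x ≠ 0} with hX
  have hXm : MeasurableSet X := (measurable_deriv f) (measurableSet_singleton (0 : ℝ)).compl
  have hXinj : InjOn f X := fun x hx x' _ h => aux_inj hf hx h
  have hXd : ∀ x ∈ X, HasDerivWithinAt f (deriv f x) X x := fun x hx =>
    (differentiableAt_of_deriv_ne_zero hx).hasDerivAt.hasDerivWithinAt
  set Z : Set ℝ := {x | DifferentiableAt ℝ f x} ∩ {x | deriv f x = 0} with hZ
  have hZm : MeasurableSet Z := (measurableSet_of_differentiableAt ℝ f).inter
    ((measurable_deriv f) (measurableSet_singleton (0 : ℝ)))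
  have hZ0 : volume (f '' Z) = 0 := by
    refine le_antisymm ?_ bot_le
    refine (addHaar_image_le_lintegral_abs_det_fderiv volume hZm
      (f' := fun x => ContinuousLinearMap.toSpanSingleton ℝ (deriv f x))
      fun x hx => hx.1.hasDerivAt.hasDerivWithinAt.hasFDerivWithinAt).trans ?_
    refine le_of_eq (setLIntegral_eq_zero hZm fun x hx => ?_)
    have : deriv f x = 0 := hx.2
    simp [this]
  have hfXm : MeasurableSet (f '' X) := hXm.image_of_measurable_injOn hf.measurable hXinj
  rw [Measure.volume_eq_prod, Measure.prod_apply hA]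
  have hae : ∀ᵐ u : ℝ, u ∉ f '' X → volume (Prod.mk u ⁻¹' (T '' B)) = 0 := by
    filter_upwards [measure_eq_zero_iff_ae_notMem.1 hZ0] with u hu huX
    have : Prod.mk u ⁻¹' (T '' B) = ∅ := by
      rw [eq_empty_iff_forall_notMem]
      rintro v ⟨z, hz, hzv⟩
      have h1 : f z.1 = u := by rw [← hT1 z hz, hzv]
      by_cases h0 : deriv f z.1 = 0
      · exact hu ⟨z.1, ⟨hd1 z hz, h0⟩, h1⟩
      · exact huX ⟨z.1, h0, h1⟩
    simp [this]
  have step1 : ∫⁻ u, volume (Prod.mk u ⁻¹' (T '' B)) =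
      ∫⁻ u in f '' X, volume (Prod.mk u ⁻¹' (T '' B)) := by
    rw [← lintegral_indicator hfXm]
    refine lintegral_congr_ae ?_
    filter_upwards [hae] with u hu
    by_cases h : u ∈ f '' X
    · simp [h]
    · simp [h, hu h]
  rw [step1, lintegral_image_eq_lintegral_abs_deriv_mul hXm hXd hXinj]
  have slice : ∀ x ∈ X, volume (Prod.mk (f x) ⁻¹' (T '' B)) =
      ∫⁻ y in Prod.mk x ⁻¹' B, ENNReal.ofReal |b (x, y)| := by
    intro x hx
    have himg : Prod.mk (f x) ⁻¹' (T '' B) = (fun y => (T (x, y)).2) '' (Prod.mk x ⁻¹' B) := by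
      ext v
      constructor
      · rintro ⟨⟨x', y⟩, hz, hzv⟩
        have h1 : f x' = f x := by have := hT1 _ hz; rw [hzv] at this; exact this.symm
        have h2 : x = x' := aux_inj hf hx h1.symm
        subst h2
        exact ⟨y, hz, by simp [hzv]⟩
      · rintro ⟨y, hy, rfl⟩
        exact ⟨(x, y), hy, Prod.ext (hT1 _ hy) rfl⟩
    have hi : InjOn (fun y => (T (x, y)).2) (Prod.mk x ⁻¹' B) := by
      intro y hy y' hy' h
      have : (x, y) = (x, y') := hinj hy hy'
        (Prod.ext ((hT1 _ hy).trans (hT1 _ hy').symm) h)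
      exact (Prod.ext_iff.1 this).2
    have := lintegral_image_eq_lintegral_abs_deriv_mul (hBx x)
      (f := fun y => (T (x, y)).2) (f' := fun y => b (x, y))
      (fun y hy => (hd2 (x, y) hy).hasDerivWithinAt) hi (fun _ => 1)
    rw [himg]
    simpa using this
  rw [setLIntegral_congr_fun hXm (g := fun x => ENNReal.ofReal |deriv f x| *
    ∫⁻ y in Prod.mk x ⁻¹' B, ENNReal.ofReal |b (x, y)|)
    (fun x hx => by simp only [slice x hx])]
  have hm2 : Measurable fun z : ℝ × ℝ => ENNReal.ofReal |deriv f z.1| * ENNReal.ofReal |b z| := by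
    have h1 : Measurable fun z : ℝ × ℝ => |deriv f z.1| :=
      continuous_abs.measurable.comp ((measurable_deriv f).comp measurable_fst)
    have h2 : Measurable fun z : ℝ × ℝ => |b z| := continuous_abs.measurable.comp hb
    exact h1.ennreal_ofReal.mul h2.ennreal_ofReal
  rw [← lintegral_indicator hB, lintegral_prod _ (hm2.indicator hB).aemeasurable,
    ← lintegral_indicator hXm]
  refine lintegral_congr fun x => ?_
  have e1 : ∀ y, B.indicator (fun z : ℝ × ℝ => ENNReal.ofReal |deriv f z.1| *
      ENNReal.ofReal |b z|) (x, y) = ENNReal.ofReal |deriv f x| *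
      (Prod.mk x ⁻¹' B).indicator (fun y => ENNReal.ofReal |b (x, y)|) y := by
    intro y
    by_cases h : (x, y) ∈ B
    · rw [indicator_of_mem h, indicator_of_mem (by exact h)]
    · rw [indicator_of_notMem h, indicator_of_notMem (by exact h), mul_zero]
  simp_rw [e1]
  rw [lintegral_const_mul' _ _ ENNReal.ofReal_ne_top, lintegral_indicator (hBx x)]
  by_cases h : x ∈ X
  · rw [indicator_of_mem h]
  · rw [indicator_of_notMem h]
    have : deriv f x = 0 := by simpa [hX] using h
    simp [this]

open Filter Topology Set in
lemma aux_cov {T : ℝ × ℝ → ℝ × ℝ} (hT : Measurable T) {w : ℝ × ℝ → ENNReal} (hw : Measurable w)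
    {S : Set (ℝ × ℝ)} (hS : MeasurableSet S)
    (h : ∀ B, MeasurableSet B → B ⊆ S → volume (T '' B) = ∫⁻ z in B, w z)
    {k : ℝ × ℝ → ENNReal} (hk : Measurable k) :
    ∫⁻ u in T '' S, k u = ∫⁻ z in S, w z * k (T z) := by
  have hmeas : (volume : Measure (ℝ × ℝ)).restrict (T '' S) =
      Measure.map T ((volume.restrict S).withDensity w) := by
    ext A hA
    rw [Measure.map_apply hT hA, withDensity_apply _ (hT hA), Measure.restrict_restrict (hT hA),
      Measure.restrict_apply hA, ← h _ ((hT hA).inter hS) inter_subset_right]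
    rw [image_preimage_inter]
  rw [hmeas, lintegral_map hk hT]
  exact lintegral_withDensity_eq_lintegral_mul _ hw (hk.comp hT)

open Filter Topology Set in
theorem stmt_6
    (ρ₀ ρ₁ : ℝ × ℝ → ℝ) (hρ₀m : Measurable ρ₀) (hρ₁m : Measurable ρ₁)
    (hρ₀0 : ∀ z, 0 ≤ ρ₀ z) (hρ₁0 : ∀ z, 0 ≤ ρ₁ z)
    (μ₀ μ₁ : Measure (ℝ × ℝ))
    (hμ₀ : μ₀ = volume.withDensity fun z => ENNReal.ofReal (ρ₀ z))
    (hμ₁ : μ₁ = volume.withDensity fun z => ENNReal.ofReal (ρ₁ z))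
    (hp₀ : IsProbabilityMeasure μ₀) (hp₁ : IsProbabilityMeasure μ₁)
    (T : ℝ × ℝ → ℝ × ℝ) (hTm : Measurable T)
    (hpush : Measure.map T μ₀ = μ₁)
    (hinj : ∃ N : Set (ℝ × ℝ), μ₀ N = 0 ∧ Set.InjOn T Nᶜ)
    (hloc : ∀ᵐ z ∂μ₀, ∃ U ∈ nhds z, ∀ p ∈ U, ∀ q ∈ U, p.1 = q.1 → (T p).1 = (T q).1)
    (hmono1 : ∀ y : ℝ, Monotone fun x => (T (x, y)).1)
    (hmono2 : ∀ x : ℝ, Monotone fun y => (T (x, y)).2) :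
    ∀ᵐ z ∂μ₀, ∃ a b : ℝ,
      HasDerivAt (fun x => (T (x, z.2)).1) a z.1 ∧
      HasDerivAt (fun y => (T (z.1, y)).2) b z.2 ∧
      ρ₁ (T z) * (a * b) = ρ₀ z := by
  obtain ⟨N, hN0, hNinj⟩ := hinj
  set N' := toMeasurable μ₀ N with hN'
  have hN'm : MeasurableSet N' := measurableSet_toMeasurable _ _
  have hN'0 : μ₀ N' = 0 := by rw [hN', measure_toMeasurable, hN0]
  have hN'inj : InjOn T N'ᶜ := hNinj.mono (compl_subset_compl.2 (subset_toMeasurable μ₀ N))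
  have hac : μ₀ ≪ volume := by rw [hμ₀]; exact withDensity_absolutelyContinuous _ _
  obtain ⟨b, hbm, hD2m, hD2ae⟩ := aux_param (measurable_snd.comp hTm) hmono2
  simp only [Function.comp_def] at hD2m hD2ae
  -- the statement on one rational box
  have box : ∀ r : ℚ × ℚ × ℚ × ℚ × ℚ,
      (∀ p ∈ Ioo (r.1 : ℝ) r.2.1 ×ˢ Ioo (r.2.2.1 : ℝ) r.2.2.2.1,
        (T p).1 = (T (p.1, (r.2.2.2.2 : ℝ))).1) →
      ∀ᵐ z ∂μ₀, z ∈ Ioo (r.1 : ℝ) r.2.1 ×ˢ Ioo (r.2.2.1 : ℝ) r.2.2.2.1 → ∃ a b : ℝ,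
        HasDerivAt (fun x => (T (x, z.2)).1) a z.1 ∧
        HasDerivAt (fun y => (T (z.1, y)).2) b z.2 ∧
        ρ₁ (T z) * (a * b) = ρ₀ z := by
    rintro ⟨r1, r2, r3, r4, q⟩ hQ
    simp only at hQ ⊢
    set Q : Set (ℝ × ℝ) := Ioo (r1 : ℝ) r2 ×ˢ Ioo (r3 : ℝ) r4 with hQdef
    have hQo : IsOpen Q := isOpen_Ioo.prod isOpen_Ioo
    set f : ℝ → ℝ := fun x => (T (x, (q : ℝ))).1 with hf
    have hfm : Monotone f := hmono1 q
    have hD1m : MeasurableSet {z : ℝ × ℝ | DifferentiableAt ℝ f z.1} :=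
      measurable_fst (measurableSet_of_differentiableAt ℝ f)
    have hD1ae : ∀ᵐ z : ℝ × ℝ, DifferentiableAt ℝ f z.1 :=
      Measure.quasiMeasurePreserving_fst.ae hfm.ae_differentiableAt
    set S : Set (ℝ × ℝ) := Q ∩ {z : ℝ × ℝ | DifferentiableAt ℝ f z.1} ∩
      {z : ℝ × ℝ | HasDerivAt (fun y => (T (z.1, y)).2) (b z) z.2} ∩ N'ᶜ with hSdef
    have hSm : MeasurableSet S :=
      ((hQo.measurableSet.inter hD1m).inter hD2m).inter hN'm.compl
    have hwm : Measurable fun z : ℝ × ℝ =>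
        ENNReal.ofReal |deriv f z.1| * ENNReal.ofReal |b z| := by
      have h1 : Measurable fun z : ℝ × ℝ => |deriv f z.1| :=
        continuous_abs.measurable.comp ((measurable_deriv f).comp measurable_fst)
      have h2 : Measurable fun z : ℝ × ℝ => |b z| := continuous_abs.measurable.comp hbm
      exact h1.ennreal_ofReal.mul h2.ennreal_ofReal
    have hvol : ∀ B, MeasurableSet B → B ⊆ S → volume (T '' B) =
        ∫⁻ z in B, ENNReal.ofReal |deriv f z.1| * ENNReal.ofReal |b z| := by
      intro B hB hBS
      exact aux_vol hfm hbm hTm hB (hN'inj.mono fun z hz => (hBS hz).2)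
        (fun z hz => hQ z (hBS hz).1.1.1) (fun z hz => (hBS hz).1.1.2)
        (fun z hz => (hBS hz).1.2)
    have hr0 : Measurable fun z => ENNReal.ofReal (ρ₀ z) := hρ₀m.ennreal_ofReal
    have hr1 : Measurable fun z => ENNReal.ofReal (ρ₁ z) := hρ₁m.ennreal_ofReal
    have key : ∀ B, MeasurableSet B → B ⊆ S → ∫⁻ z in B, ENNReal.ofReal (ρ₀ z) =
        ∫⁻ z in B, ENNReal.ofReal |deriv f z.1| * ENNReal.ofReal |b z| *
          ENNReal.ofReal (ρ₁ (T z)) := by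
      intro B hB hBS
      have hTB : MeasurableSet (T '' B) :=
        hB.image_of_measurable_injOn hTm (hN'inj.mono fun z hz => (hBS hz).2)
      rw [← aux_cov hTm hwm hB (fun B' hB' hs => hvol B' hB' (hs.trans hBS)) hr1,
        ← withDensity_apply _ hB, ← withDensity_apply _ hTB, ← hμ₀, ← hμ₁, ← hpush,
        Measure.map_apply hTm hTB]
      refine le_antisymm (measure_mono (subset_preimage_image T B)) ?_
      have hsub : T ⁻¹' (T '' B) ⊆ B ∪ N' := by
        rintro z ⟨z', hz', he⟩
        by_cases hz : z ∈ N'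
        · exact Or.inr hz
        · have : z' = z := hN'inj (hBS hz').2 hz he
          exact Or.inl (this ▸ hz')
      calc μ₀ (T ⁻¹' (T '' B)) ≤ μ₀ (B ∪ N') := measure_mono hsub
        _ ≤ μ₀ B + μ₀ N' := measure_union_le _ _
        _ = μ₀ B := by rw [hN'0, add_zero]
    have haeS : (fun z => ENNReal.ofReal (ρ₀ z)) =ᵐ[volume.restrict S] fun z =>
        ENNReal.ofReal |deriv f z.1| * ENNReal.ofReal |b z| * ENNReal.ofReal (ρ₁ (T z)) := by
      refine ae_eq_of_forall_setLIntegral_eq_of_sigmaFinite hr0 (hwm.mul (hr1.comp hTm)) ?_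
      intro s hs _
      rw [Measure.restrict_restrict hs]
      exact key _ (hs.inter hSm) inter_subset_right
    have haeS' := hac.ae_le ((ae_restrict_iff' hSm).1 haeS)
    filter_upwards [haeS', hac.ae_le hD1ae, hac.ae_le hD2ae,
      measure_eq_zero_iff_ae_notMem.1 hN'0] with z hz h1 h2 h3 hzQ
    have hE := hz ⟨⟨⟨hzQ, h1⟩, h2⟩, h3⟩
    refine ⟨deriv f z.1, b z, ?_, h2, ?_⟩
    · refine h1.hasDerivAt.congr_of_eventuallyEq ?_
      have : Ioo (r1 : ℝ) r2 ∈ 𝓝 z.1 := Ioo_mem_nhds hzQ.1.1 hzQ.1.2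
      filter_upwards [this] with x hx
      exact hQ (x, z.2) ⟨hx, hzQ.2⟩
    · have ha : 0 ≤ deriv f z.1 := hfm.deriv_nonneg
      have hb : 0 ≤ b z := by
        rw [← h2.deriv]; exact (hmono2 z.1).deriv_nonneg
      rw [abs_of_nonneg ha, abs_of_nonneg hb, ← ENNReal.ofReal_mul ha,
        ← ENNReal.ofReal_mul (mul_nonneg ha hb)] at hE
      have := (ENNReal.ofReal_eq_ofReal_iff (hρ₀0 z)
        (mul_nonneg (mul_nonneg ha hb) (hρ₁0 _))).1 hE
      rw [this]; ring
  have hall : ∀ᵐ z ∂μ₀, ∀ r : ℚ × ℚ × ℚ × ℚ × ℚ,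
      (∀ p ∈ Ioo (r.1 : ℝ) r.2.1 ×ˢ Ioo (r.2.2.1 : ℝ) r.2.2.2.1,
        (T p).1 = (T (p.1, (r.2.2.2.2 : ℝ))).1) →
      z ∈ Ioo (r.1 : ℝ) r.2.1 ×ˢ Ioo (r.2.2.1 : ℝ) r.2.2.2.1 → ∃ a b : ℝ,
        HasDerivAt (fun x => (T (x, z.2)).1) a z.1 ∧
        HasDerivAt (fun y => (T (z.1, y)).2) b z.2 ∧
        ρ₁ (T z) * (a * b) = ρ₀ z := by
    rw [ae_all_iff]
    intro r
    by_cases hr : ∀ p ∈ Ioo (r.1 : ℝ) r.2.1 ×ˢ Ioo (r.2.2.1 : ℝ) r.2.2.2.1,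
        (T p).1 = (T (p.1, (r.2.2.2.2 : ℝ))).1
    · filter_upwards [box r hr] with z hz _ using hz
    · exact Eventually.of_forall fun z h => absurd h hr
  filter_upwards [hall, hloc] with z hz hU
  obtain ⟨U, hU, hUT⟩ := hU
  obtain ⟨ε, hε, hball⟩ := Metric.mem_nhds_iff.1 hU
  obtain ⟨r1, h11, h12⟩ := exists_rat_btwn (show z.1 - ε < z.1 by linarith)
  obtain ⟨r2, h21, h22⟩ := exists_rat_btwn (show z.1 < z.1 + ε by linarith)
  obtain ⟨r3, h31, h32⟩ := exists_rat_btwn (show z.2 - ε < z.2 by linarith)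
  obtain ⟨r4, h41, h42⟩ := exists_rat_btwn (show z.2 < z.2 + ε by linarith)
  obtain ⟨q, hq1, hq2⟩ := exists_rat_btwn (show z.2 < (r4 : ℝ) from h41)
  have hin : ∀ x y : ℝ, x ∈ Ioo (r1 : ℝ) r2 → y ∈ Ioo (r3 : ℝ) r4 → (x, y) ∈ U := by
    intro x y hx hy
    apply hball
    rw [Metric.mem_ball, Prod.dist_eq, max_lt_iff, Real.dist_eq, Real.dist_eq, abs_lt, abs_lt]
    simp only
    refine ⟨⟨?_, ?_⟩, ⟨?_, ?_⟩⟩ <;> linarith [hx.1, hx.2, hy.1, hy.2]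
  refine hz (r1, r2, r3, r4, q) ?_ ⟨⟨h12, h21⟩, ⟨h32, h41⟩⟩
  rintro ⟨x, y⟩ ⟨hx, hy⟩
  exact hUT _ (hin x y hx hy) _ (hin x q hx ⟨by linarith, hq2⟩) rfl
end

section
/- Let μ₀, μ₁ be Borel probability measures on X, absolutely continuous with respect to m (equivalently, with respect to Lebesgue measure on X), with Lebesgue densities ρ̃₀, ρ̃₁. Let T : X → X and M : X×X → X be Borel maps with T_#μ₀ = μ₁; set S = M∘(id,T) and μ_{1/2} = S_#μ₀, and assume μ_{1/2} is absolutely continuous with Lebesgue density ρ̃_{1/2}. Assume T and S are injective outside μ₀-null sets and satisfy the Jacobi equation: there are nonnegative Borel functions J_T, J_S on X with ρ̃₁(T(z))·J_T(z) = ρ̃₀(z) and ρ̃_{1/2}(S(z))·J_S(z) = ρ̃₀(z) for μ₀-almost every z. If log( m(S(z))·J_S(z) ) ≥ (1/2)·log( m(T(z))·J_T(z) ) + (1/2)·log( m(z) ) for μ₀-almost every z, then Ent(μ_{1/2}) ≤ (1/2)·Ent(μ₀) + (1/2)·Ent(μ₁). -/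
open MeasureTheory

-- The relative entropy `Ent(μ) = ∫ ρ log ρ dm` if `μ = ρ·m ≪ m` (with value `+∞`
-- if the integral diverges or `μ` is not absolutely continuous w.r.t. `m`).
open Classical in
noncomputable def Ent {α : Type*} [MeasurableSpace α] (m μ : Measure α) : EReal :=
  if μ ≪ m ∧ Integrable (llr μ m) μ then ((∫ z, llr μ m z ∂μ : ℝ) : EReal) else ⊤

theorem aux_llr {X : Set (ℝ × ℝ)} (hXm : MeasurableSet X) {d : ℝ × ℝ → ℝ} (hd : Measurable d)
    (hdpos : ∀ z ∈ X, 0 < d z) {m μ : Measure (ℝ × ℝ)}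
    (hm : m = volume.withDensity (X.indicator fun z => ENNReal.ofReal (d z)))
    [SigmaFinite m] {ρ : ℝ × ℝ → ℝ} (hρ : Measurable ρ) (hρ0 : ∀ z, 0 ≤ ρ z)
    (hμ : μ = volume.withDensity fun z => ENNReal.ofReal (ρ z)) (hμX : μ Xᶜ = 0) :
    μ ≪ m ∧ ∀ᵐ z ∂μ, 0 < ρ z ∧ z ∈ X ∧ llr μ m z = Real.log (ρ z / d z) := by
  have hXae : ∀ᵐ z ∂μ, z ∈ X := by
    rw [ae_iff]; exact hμX
  have hm1 : Measurable fun z => ENNReal.ofReal (ρ z) := hρ.ennreal_ofReal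
  have hpos : ∀ᵐ z ∂μ, 0 < ρ z := by
    rw [hμ, ae_withDensity_iff hm1]
    filter_upwards with z hz
    have := (ENNReal.ofReal_ne_zero_iff).1 hz
    exact this
  have hzero : ∀ᵐ z ∂(volume : Measure (ℝ × ℝ)), z ∉ X → ρ z = 0 := by
    have h := hXae
    rw [hμ, ae_withDensity_iff hm1] at h
    filter_upwards [h] with z hz hzX
    by_contra hne
    exact hzX (hz (ENNReal.ofReal_ne_zero_iff.2 (lt_of_le_of_ne (hρ0 z) (Ne.symm hne))))
  have hg : Measurable fun z => ENNReal.ofReal (ρ z / d z) := (hρ.div hd).ennreal_ofReal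
  have hμm : μ = m.withDensity fun z => ENNReal.ofReal (ρ z / d z) := by
    rw [hm, ← withDensity_mul _ (hd.ennreal_ofReal.indicator hXm) hg, hμ]
    apply withDensity_congr_ae
    filter_upwards [hzero] with z hz
    by_cases hzX : z ∈ X
    · have hdz := hdpos z hzX
      simp only [Pi.mul_apply, Set.indicator_of_mem hzX]
      rw [← ENNReal.ofReal_mul hdz.le, mul_div_cancel₀ _ hdz.ne']
    · simp [hzX, hz hzX]
  have hac : μ ≪ m := by rw [hμm]; exact withDensity_absolutelyContinuous _ _
  refine ⟨hac, ?_⟩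
  have hrn : μ.rnDeriv m =ᵐ[m] fun z => ENNReal.ofReal (ρ z / d z) := by
    conv_lhs => rw [hμm]
    exact Measure.rnDeriv_withDensity m hg
  filter_upwards [hXae, hpos, hac.ae_le hrn] with z h1 h2 h3
  refine ⟨h2, h1, ?_⟩
  rw [llr, h3, ENNReal.toReal_ofReal (div_nonneg h2.le (hdpos z h1).le)]

theorem aux_ent {m μ : Measure (ℝ × ℝ)} [IsFiniteMeasure m] [IsFiniteMeasure μ] (hac : μ ≪ m)
    {g : ℝ × ℝ → ℝ} {ν : Measure (ℝ × ℝ)} {S : ℝ × ℝ → ℝ × ℝ} (hS : Measurable S)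
    (hmap : μ = Measure.map S ν) (hg : Integrable g ν)
    (hle : ∀ᵐ z ∂ν, llr μ m (S z) ≤ g z) : Ent m μ ≤ ((∫ z, g z ∂ν : ℝ) : EReal) := by
  have hlm : Measurable (llr μ m) := measurable_llr μ m
  have hexp : Integrable (fun z => Real.exp (-llr μ m z)) μ :=
    (Measure.integrable_toReal_rnDeriv (μ := m) (ν := μ)).congr (exp_neg_llr hac).symm
  have hexp' : Integrable (fun z => Real.exp (-llr μ m (S z))) ν := by
    rw [hmap] at hexp
    have := (integrable_map_measure (by rw [← hmap]; exact (hlm.neg.exp).aestronglyMeasurable) hS.aemeasurable).1 hexp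
    rw [← hmap] at this
    exact this
  have hint : Integrable (fun z => llr μ m (S z)) ν := by
    refine integrable_of_le_of_le (hlm.comp hS).aestronglyMeasurable ?_ hle hexp'.neg hg
    filter_upwards with z
    have := Real.add_one_le_exp (-llr μ m (S z))
    simp only [Pi.neg_apply]
    linarith
  have key : ∀ F : ℝ × ℝ → ℝ, Measurable F → Integrable (fun z => F (S z)) ν → Integrable F μ ∧ ∫ z, F z ∂μ = ∫ z, F (S z) ∂ν := by
    intro F hF hi
    rw [hmap]
    exact ⟨(integrable_map_measure hF.aestronglyMeasurable hS.aemeasurable).2 hi,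
      integral_map hS.aemeasurable hF.aestronglyMeasurable⟩
  obtain ⟨h1, h2⟩ := key _ hlm hint
  rw [Ent, if_pos ⟨hac, h1⟩, h2]
  exact_mod_cast integral_mono_ae hint hg hle

theorem stmt_7 (ε k K : ℝ) (hε : 0 < ε) (hεk : ε < k) (hk : k < 1 / 2) (hK : 1 ≤ K)
    (φ : ℝ → ℝ) (hφc : Continuous φ) (hφ0 : ∀ x, 0 ≤ φ x) (hφ1 : ∀ x, φ x ≤ 1)
    (hφsupp : ∀ x, x ∉ Set.Icc (-k) k → φ x = 0)
    (hφint : (∫ x, φ x) = k)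
    (f f' : ℝ → ℝ)
    (hfd : ∀ x, HasDerivAt f (f' x) x)
    (hfd2 : ∀ x, HasDerivAt f' (φ x) x)
    (hf'm1 : f' (-1) = 0) (hfm1 : f (-1) = ε)
    (X : Set (ℝ × ℝ))
    (hX : X = {p : ℝ × ℝ | p.1 ∈ Set.Icc (-1 : ℝ) 1 ∧ 0 ≤ p.2 ∧ p.2 ≤ f p.1})
    -- the density of the reference measure m and the measure m itself
    (mdens : ℝ × ℝ → ℝ)
    (hmdens : mdens = fun z => (1 / f z.1) * Real.exp (-K * (z.2 / f z.1) ^ 2))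
    (m : Measure (ℝ × ℝ))
    (hm : m = volume.withDensity (X.indicator fun z => ENNReal.ofReal (mdens z)))
    -- the marginals, absolutely continuous w.r.t. m, with Lebesgue densities
    (μ₀ μ₁ : Measure (ℝ × ℝ))
    (hp₀ : IsProbabilityMeasure μ₀) (hp₁ : IsProbabilityMeasure μ₁)
    (hac₀ : μ₀ ≪ m) (hac₁ : μ₁ ≪ m)
    (ρ₀ ρ₁ : ℝ × ℝ → ℝ) (hρ₀m : Measurable ρ₀) (hρ₁m : Measurable ρ₁)
    (hρ₀0 : ∀ z, 0 ≤ ρ₀ z) (hρ₁0 : ∀ z, 0 ≤ ρ₁ z)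
    (hμ₀ : μ₀ = volume.withDensity fun z => ENNReal.ofReal (ρ₀ z))
    (hμ₁ : μ₁ = volume.withDensity fun z => ENNReal.ofReal (ρ₁ z))
    -- the transport map T and the midpoint selection M
    (T : ℝ × ℝ → ℝ × ℝ) (hTm : Measurable T) (hTX : ∀ z ∈ X, T z ∈ X)
    (M : (ℝ × ℝ) × (ℝ × ℝ) → ℝ × ℝ) (hMm : Measurable M)
    (hMX : ∀ p ∈ X, ∀ q ∈ X, M (p, q) ∈ X)
    (S : ℝ × ℝ → ℝ × ℝ) (hS : S = fun z => M (z, T z))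
    (hpushT : Measure.map T μ₀ = μ₁)
    -- the midpoint measure, absolutely continuous with Lebesgue density
    (μhalf : Measure (ℝ × ℝ)) (hμhalf : μhalf = Measure.map S μ₀)
    (ρhalf : ℝ × ℝ → ℝ) (hρhm : Measurable ρhalf) (hρh0 : ∀ z, 0 ≤ ρhalf z)
    (hμhd : μhalf = volume.withDensity fun z => ENNReal.ofReal (ρhalf z))
    -- injectivity outside a null set
    (hinjT : ∃ N : Set (ℝ × ℝ), μ₀ N = 0 ∧ Set.InjOn T Nᶜ)
    (hinjS : ∃ N : Set (ℝ × ℝ), μ₀ N = 0 ∧ Set.InjOn S Nᶜ)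
    -- the Jacobi equations
    (JT JS : ℝ × ℝ → ℝ) (hJTm : Measurable JT) (hJSm : Measurable JS)
    (hJT0 : ∀ z, 0 ≤ JT z) (hJS0 : ∀ z, 0 ≤ JS z)
    (hJacT : ∀ᵐ z ∂μ₀, ρ₁ (T z) * JT z = ρ₀ z)
    (hJacS : ∀ᵐ z ∂μ₀, ρhalf (S z) * JS z = ρ₀ z)
    -- the pointwise logarithmic inequality
    (hlog : ∀ᵐ z ∂μ₀,
      Real.log (mdens (S z) * JS z) ≥
        (1 / 2) * Real.log (mdens (T z) * JT z) + (1 / 2) * Real.log (mdens z)) :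
    Ent m μhalf ≤ ((1 / 2 : ℝ) : EReal) * Ent m μ₀ + ((1 / 2 : ℝ) : EReal) * Ent m μ₁ := by
  have hf'nn : ∀ x, -1 ≤ x → 0 ≤ f' x := by
    have hmono : Monotone f' := monotone_of_deriv_nonneg (fun x => (hfd2 x).differentiableAt)
      (fun x => by rw [(hfd2 x).deriv]; exact hφ0 x)
    intro x hx
    rw [← hf'm1]; exact hmono hx
  have hfc : Continuous f := continuous_iff_continuousAt.2 fun x => (hfd x).continuousAt
  have hfε : ∀ x, -1 ≤ x → ε ≤ f x := by
    have hmono : MonotoneOn f (Set.Ici (-1)) := by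
      refine monotoneOn_of_deriv_nonneg (convex_Ici _) hfc.continuousOn
        (fun x _ => (hfd x).differentiableAt.differentiableWithinAt) (fun x hx => ?_)
      rw [(hfd x).deriv]
      rw [interior_Ici] at hx
      exact hf'nn x (le_of_lt hx)
    intro x hx
    rw [← hfm1]
    exact hmono (Set.mem_Ici.2 le_rfl) (Set.mem_Ici.2 hx) hx
  have hXm : MeasurableSet X := by
    rw [hX]
    refine (measurable_fst measurableSet_Icc).inter ((measurableSet_le measurable_const measurable_snd).inter
      (measurableSet_le measurable_snd (hfc.measurable.comp measurable_fst)))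
  have hXε : ∀ z ∈ X, ε ≤ f z.1 := by
    intro z hz
    rw [hX] at hz
    exact hfε _ hz.1.1
  have hdm : Measurable mdens := by
    rw [hmdens]
    have h1 : Measurable fun z : ℝ × ℝ => f z.1 := hfc.measurable.comp measurable_fst
    exact (measurable_const.div h1).mul (((measurable_snd.div h1).pow_const 2).const_mul (-K)).exp
  have hdpos : ∀ z ∈ X, 0 < mdens z := by
    intro z hz
    have := lt_of_lt_of_le hε (hXε z hz)
    rw [hmdens]; positivity
  have hdle : ∀ z ∈ X, mdens z ≤ 1 / ε := by
    intro z hz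
    have h1 := hXε z hz
    have h2 : Real.exp (-K * (z.2 / f z.1) ^ 2) ≤ 1 := by
      rw [Real.exp_le_one_iff]
      have := sq_nonneg (z.2 / f z.1)
      nlinarith
    have h3 : 1 / f z.1 ≤ 1 / ε := one_div_le_one_div_of_le hε h1
    have h4 : 0 ≤ 1 / ε := by positivity
    rw [hmdens]
    calc (1 / f z.1) * Real.exp (-K * (z.2 / f z.1) ^ 2) ≤ (1 / ε) * 1 :=
          mul_le_mul h3 h2 (Real.exp_pos _).le h4
      _ = 1 / ε := mul_one _
  have hXvol : volume X < ⊤ := by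
    obtain ⟨C, hC⟩ := (isCompact_Icc (a := (-1 : ℝ)) (b := 1)).exists_bound_of_continuousOn hfc.continuousOn
    have hsub : X ⊆ Set.Icc (-1 : ℝ) 1 ×ˢ Set.Icc (0 : ℝ) C := by
      intro z hz
      rw [hX] at hz
      refine ⟨hz.1, hz.2.1, hz.2.2.trans ((le_abs_self _).trans (hC _ hz.1))⟩
    exact (measure_mono hsub).trans_lt (isCompact_Icc.prod isCompact_Icc).measure_lt_top
  have hmfin : IsFiniteMeasure m := by
    rw [hm]
    apply isFiniteMeasure_withDensity
    rw [lintegral_indicator hXm]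
    refine ne_of_lt (lt_of_le_of_lt (setLIntegral_mono (g := fun _ => ENNReal.ofReal (1 / ε)) measurable_const
      (fun z hz => ENNReal.ofReal_le_ofReal (hdle z hz))) ?_)
    rw [setLIntegral_const]
    exact ENNReal.mul_lt_top ENNReal.ofReal_lt_top hXvol
  have hmX : m Xᶜ = 0 := by
    rw [hm, withDensity_apply _ hXm.compl]
    rw [setLIntegral_congr_fun (g := fun _ => 0) hXm.compl (fun z hz => Set.indicator_of_notMem hz _)]
    simp
  have hSm : Measurable S := by
    rw [hS]; exact hMm.comp (measurable_id.prodMk hTm)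
  have hX0 : μ₀ Xᶜ = 0 := hac₀ hmX
  have hXh : μhalf Xᶜ = 0 := by
    rw [hμhalf, Measure.map_apply hSm hXm.compl]
    refine measure_mono_null (fun z hz => ?_) hX0
    intro hzX
    apply hz
    rw [hS]
    exact hMX _ hzX _ (hTX z hzX)
  obtain ⟨-, h0⟩ := aux_llr hXm hdm hdpos hm hρ₀m hρ₀0 hμ₀ hX0
  obtain ⟨-, h1⟩ := aux_llr hXm hdm hdpos hm hρ₁m hρ₁0 hμ₁ (hac₁ hmX)
  obtain ⟨hach, hh⟩ := aux_llr hXm hdm hdpos hm hρhm hρh0 hμhd hXh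
  have hph : IsFiniteMeasure μhalf := by
    rw [hμhalf]; infer_instance
  have h1T := ae_of_ae_map (μ := μ₀) hTm.aemeasurable (by rw [hpushT]; exact h1)
  have hhS := ae_of_ae_map (μ := μ₀) hSm.aemeasurable (by rw [← hμhalf]; exact hh)
  have hpt : ∀ᵐ z ∂μ₀, llr μhalf m (S z) ≤ (1 / 2) * llr μ₀ m z + (1 / 2) * llr μ₁ m (T z) := by
    filter_upwards [h0, h1T, hhS, hJacT, hJacS, hlog] with z a0 a1 ah jT jS hl
    obtain ⟨p0, x0, e0⟩ := a0
    obtain ⟨p1, x1, e1⟩ := a1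
    obtain ⟨ph, xh, eh⟩ := ah
    have d0 := hdpos _ x0
    have d1 := hdpos _ x1
    have dh := hdpos _ xh
    have JTp : 0 < JT z := lt_of_le_of_ne (hJT0 z) (fun h => by rw [← h] at jT; simp at jT; linarith)
    have JSp : 0 < JS z := lt_of_le_of_ne (hJS0 z) (fun h => by rw [← h] at jS; simp at jS; linarith)
    have lT : Real.log (ρ₁ (T z)) + Real.log (JT z) = Real.log (ρ₀ z) := by
      rw [← jT, Real.log_mul p1.ne' JTp.ne']
    have lS : Real.log (ρhalf (S z)) + Real.log (JS z) = Real.log (ρ₀ z) := by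
      rw [← jS, Real.log_mul ph.ne' JSp.ne']
    rw [Real.log_mul dh.ne' JSp.ne', Real.log_mul d1.ne' JTp.ne'] at hl
    rw [e0, e1, eh, Real.log_div p0.ne' d0.ne', Real.log_div p1.ne' d1.ne',
      Real.log_div ph.ne' dh.ne']
    linarith
  have hnb : ∀ μ : Measure (ℝ × ℝ), ((1 / 2 : ℝ) : EReal) * Ent m μ ≠ ⊥ := by
    intro μ
    rw [Ent]
    split_ifs
    · rw [← EReal.coe_mul]; exact EReal.coe_ne_bot _
    · rw [EReal.coe_mul_top_of_pos (by norm_num)]; exact top_ne_bot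
  by_cases hi0 : Integrable (llr μ₀ m) μ₀
  swap
  · have : Ent m μ₀ = ⊤ := by rw [Ent, if_neg (fun h => hi0 h.2)]
    rw [this, EReal.coe_mul_top_of_pos (by norm_num), EReal.top_add_of_ne_bot (hnb μ₁)]
    exact le_top
  by_cases hi1 : Integrable (llr μ₁ m) μ₁
  swap
  · have : Ent m μ₁ = ⊤ := by rw [Ent, if_neg (fun h => hi1 h.2)]
    rw [this, EReal.coe_mul_top_of_pos (by norm_num), EReal.add_top_of_ne_bot (hnb μ₀)]
    exact le_top
  have hlm1 : Measurable (llr μ₁ m) := measurable_llr μ₁ m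
  have key : ∀ F : ℝ × ℝ → ℝ, Measurable F → Integrable F μ₁ →
      Integrable (fun z => F (T z)) μ₀ ∧ ∫ z, F z ∂μ₁ = ∫ z, F (T z) ∂μ₀ := by
    intro F hF hi
    rw [← hpushT] at hi ⊢
    exact ⟨(integrable_map_measure hF.aestronglyMeasurable hTm.aemeasurable).1 hi,
      integral_map hTm.aemeasurable hF.aestronglyMeasurable⟩
  obtain ⟨k1, k2⟩ := key _ hlm1 hi1
  have hfin := aux_ent hach hSm hμhalf ((hi0.const_mul (1 / 2)).add (k1.const_mul (1 / 2))) hpt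
  refine hfin.trans (le_of_eq ?_)
  rw [Ent, Ent, if_pos ⟨hac₀, hi0⟩, if_pos ⟨hac₁, hi1⟩, k2, ← EReal.coe_mul, ← EReal.coe_mul,
    ← EReal.coe_add]
  congr 1
  simp only [Pi.add_apply]
  rw [integral_add (hi0.const_mul (1 / 2)) (k1.const_mul (1 / 2)), integral_const_mul,
    integral_const_mul]
end

section
/- Under the same hypotheses as the preceding proposition (μ₀, μ₁ absolutely continuous probability measures on X, T_#μ₀ = μ₁, S = M∘(id,T), T and S injective outside μ₀-null sets and satisfying the Jacobi equations with Jacobians J_T, J_S, and log(m(S(z))·J_S(z)) ≥ (1/2)·log(m(T(z))·J_T(z)) + (1/2)·log(m(z)) for μ₀-a.e. z), for every bounded Borel function g : X → [0,∞) with ∫ g dμ₀ = 1 one has Ent( S_#(g·μ₀) ) ≤ (1/2)·Ent(g·μ₀) + (1/2)·Ent(T_#(g·μ₀)). -/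
open MeasureTheory

theorem aux_llr_s8 (r m μ₀ : Measure (ℝ × ℝ)) [SigmaFinite r] [IsFiniteMeasure μ₀]
    (md ρ g : ℝ × ℝ → ℝ) (hmd : Measurable md) (hρ : Measurable ρ) (hg : Measurable g)
    (hmd0 : ∀ᵐ z ∂r, 0 < md z) (hρ0 : ∀ z, 0 ≤ ρ z) (hg0 : ∀ z, 0 ≤ g z)
    (hm : m = r.withDensity fun z => ENNReal.ofReal (md z))
    (R : ℝ × ℝ → ℝ × ℝ) (hR : Measurable R)
    (hinj : ∃ N : Set (ℝ × ℝ), μ₀ N = 0 ∧ Set.InjOn R Nᶜ)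
    (hmap : Measure.map R μ₀ = r.withDensity fun z => ENNReal.ofReal (ρ z))
    (ν : Measure (ℝ × ℝ)) [IsFiniteMeasure ν]
    (hν : ν = μ₀.withDensity fun z => ENNReal.ofReal (g z)) :
    Measure.map R ν ≪ m ∧
    ∀ᵐ z ∂ν, llr (Measure.map R ν) m (R z) = Real.log (g z * ρ (R z) / md (R z)) := by
  obtain ⟨N, hN0, hN⟩ := hinj
  set A : Set (ℝ × ℝ) := (toMeasurable μ₀ N)ᶜ with hA
  have hAm : MeasurableSet A := (measurableSet_toMeasurable _ _).compl
  have hAN : A ⊆ Nᶜ := Set.compl_subset_compl.2 (subset_toMeasurable _ _)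
  have hAae : ∀ᵐ z ∂μ₀, z ∈ A := by
    rw [ae_iff]
    have : {a | a ∉ A} = toMeasurable μ₀ N := by ext; simp [hA]
    rw [this, measure_toMeasurable, hN0]
  have : StandardBorelSpace A := hAm.standardBorel
  have hemb : MeasurableEmbedding (fun z : A => R z) := by
    apply Measurable.measurableEmbedding (hR.comp measurable_subtype_coe)
    intro a b hab
    exact Subtype.ext (hN (hAN a.2) (hAN b.2) hab)
  obtain ⟨h', hhm, hh⟩ : ∃ h : ℝ × ℝ → ℝ, Measurable h ∧ ∀ z ∈ A, h (R z) = g z := by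
    obtain ⟨h, h1, h2⟩ := hemb.exists_measurable_extend (hg.comp measurable_subtype_coe)
      (fun _ => ⟨(0 : ℝ)⟩)
    exact ⟨h, h1, fun z hz => congrFun h2 ⟨z, hz⟩⟩
  have hg' : Measurable fun z => ENNReal.ofReal (g z) := hg.ennreal_ofReal
  have hρ' : Measurable fun z => ENNReal.ofReal (ρ z) := hρ.ennreal_ofReal
  have hmd' : Measurable fun z => ENNReal.ofReal (md z) := hmd.ennreal_ofReal
  have hh' : Measurable fun z => ENNReal.ofReal (h' z) := hhm.ennreal_ofReal
  have hdens : Measure.map R ν =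
      r.withDensity ((fun z => ENNReal.ofReal (ρ z)) * fun z => ENNReal.ofReal (h' z)) := by
    rw [withDensity_mul _ hρ' hh', ← hmap]
    ext s hs
    rw [Measure.map_apply hR hs, hν, withDensity_apply _ (hR hs), withDensity_apply _ hs,
      setLIntegral_map hs hh' hR]
    apply lintegral_congr_ae
    filter_upwards [ae_restrict_of_ae hAae] with z hz
    rw [hh z hz]
  have hmr : r ≪ m := by
    rw [hm]
    refine withDensity_absolutelyContinuous' hmd'.aemeasurable ?_
    filter_upwards [hmd0] with z hz
    simpa using hz
  have hηr : Measure.map R ν ≪ r := by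
    rw [hdens]; exact withDensity_absolutelyContinuous _ _
  refine ⟨hηr.trans hmr, ?_⟩
  have h1 : (Measure.map R ν).rnDeriv m =ᵐ[r] fun z => (ENNReal.ofReal (md z))⁻¹ *
      (Measure.map R ν).rnDeriv r z := by
    rw [hm]
    refine Measure.rnDeriv_withDensity_right _ _ hmd'.aemeasurable ?_ ?_
    · filter_upwards [hmd0] with z hz
      simpa using hz
    · exact Filter.Eventually.of_forall fun z => ENNReal.ofReal_ne_top
  have h2 : (Measure.map R ν).rnDeriv r =ᵐ[r]
      ((fun z => ENNReal.ofReal (ρ z)) * fun z => ENNReal.ofReal (h' z)) := by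
    conv_lhs => rw [hdens]
    exact Measure.rnDeriv_withDensity _ (hρ'.mul hh')
  have h3 : ∀ᵐ y ∂(Measure.map R ν), (0 < md y ∧ (Measure.map R ν).rnDeriv m y =
      (ENNReal.ofReal (md y))⁻¹ * (ENNReal.ofReal (ρ y) * ENNReal.ofReal (h' y))) := by
    apply hηr.ae_le
    filter_upwards [h1, h2, hmd0] with z a b c
    exact ⟨c, by rw [a, b]; rfl⟩
  have hνμ : ν ≪ μ₀ := by rw [hν]; exact withDensity_absolutelyContinuous _ _
  filter_upwards [ae_of_ae_map hR.aemeasurable h3, hνμ.ae_le hAae] with z hz hzA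
  rw [llr, hz.2, hh z hzA]
  simp only [ENNReal.toReal_mul, ENNReal.toReal_inv, ENNReal.toReal_ofReal (hρ0 _),
    ENNReal.toReal_ofReal (hg0 _), ENNReal.toReal_ofReal hz.1.le]
  congr 1
  field_simp

theorem aux_neg (m η : Measure (ℝ × ℝ)) [IsFiniteMeasure m] [IsFiniteMeasure η] (h : η ≪ m) :
    Integrable (fun z => max (-(llr η m z)) 0) η := by
  have hmeas : Measurable fun z => max (-(llr η m z)) 0 :=
    (measurable_llr η m).neg.max measurable_const
  refine ⟨hmeas.aestronglyMeasurable, ?_⟩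
  rw [hasFiniteIntegral_iff_ofReal (f := fun z => max (-(llr η m z)) 0)
    (Filter.Eventually.of_forall fun z => le_max_right _ _)]
  rw [← lintegral_rnDeriv_mul h hmeas.ennreal_ofReal.aemeasurable]
  refine lt_of_le_of_lt (b := ∫⁻ _, 1 ∂m) (lintegral_mono_ae ?_) (by simp)
  filter_upwards [η.rnDeriv_lt_top m] with z hz
  rw [llr]
  set x := (η.rnDeriv m z).toReal with hx
  have hx0 : 0 ≤ x := ENNReal.toReal_nonneg
  rw [← ENNReal.ofReal_toReal hz.ne, ← hx, ← ENNReal.ofReal_mul hx0, ← ENNReal.ofReal_one]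
  apply ENNReal.ofReal_le_ofReal
  rcases hx0.eq_or_lt with h0 | h0
  · simp [← h0]
  · rw [mul_max_of_nonneg _ _ hx0]
    apply max_le _ (by simp)
    have := Real.log_le_sub_one_of_pos (inv_pos.2 h0)
    rw [Real.log_inv] at this
    calc x * -Real.log x ≤ x * (x⁻¹ - 1) := by gcongr
      _ = 1 - x := by field_simp
      _ ≤ 1 := by linarith

theorem aux_ac (X : Set (ℝ × ℝ)) (ρ : ℝ × ℝ → ENNReal) (hX : MeasurableSet X)
    (μ : Measure (ℝ × ℝ)) (h : μ = volume.withDensity ρ) (hc : ∀ᵐ z ∂μ, z ∈ X) :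
    μ = (volume.restrict X).withDensity ρ := by
  rw [← restrict_withDensity hX, ← h, Measure.restrict_eq_self_of_ae_mem hc]

theorem stmt_8 (ε k K : ℝ) (hε : 0 < ε) (hεk : ε < k) (hk : k < 1 / 2) (hK : 1 ≤ K)
    (φ : ℝ → ℝ) (hφc : Continuous φ) (hφ0 : ∀ x, 0 ≤ φ x) (hφ1 : ∀ x, φ x ≤ 1)
    (hφsupp : ∀ x, x ∉ Set.Icc (-k) k → φ x = 0)
    (hφint : (∫ x, φ x) = k)
    (f f' : ℝ → ℝ)
    (hfd : ∀ x, HasDerivAt f (f' x) x)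
    (hfd2 : ∀ x, HasDerivAt f' (φ x) x)
    (hf'm1 : f' (-1) = 0) (hfm1 : f (-1) = ε)
    (X : Set (ℝ × ℝ))
    (hX : X = {p : ℝ × ℝ | p.1 ∈ Set.Icc (-1 : ℝ) 1 ∧ 0 ≤ p.2 ∧ p.2 ≤ f p.1})
    -- the density of the reference measure m and the measure m itself
    (mdens : ℝ × ℝ → ℝ)
    (hmdens : mdens = fun z => (1 / f z.1) * Real.exp (-K * (z.2 / f z.1) ^ 2))
    (m : Measure (ℝ × ℝ))
    (hm : m = volume.withDensity (X.indicator fun z => ENNReal.ofReal (mdens z)))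
    -- the marginals, absolutely continuous w.r.t. m, with Lebesgue densities
    (μ₀ μ₁ : Measure (ℝ × ℝ))
    (hp₀ : IsProbabilityMeasure μ₀) (hp₁ : IsProbabilityMeasure μ₁)
    (hac₀ : μ₀ ≪ m) (hac₁ : μ₁ ≪ m)
    (ρ₀ ρ₁ : ℝ × ℝ → ℝ) (hρ₀m : Measurable ρ₀) (hρ₁m : Measurable ρ₁)
    (hρ₀0 : ∀ z, 0 ≤ ρ₀ z) (hρ₁0 : ∀ z, 0 ≤ ρ₁ z)
    (hμ₀ : μ₀ = volume.withDensity fun z => ENNReal.ofReal (ρ₀ z))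
    (hμ₁ : μ₁ = volume.withDensity fun z => ENNReal.ofReal (ρ₁ z))
    -- the transport map T and the midpoint selection M
    (T : ℝ × ℝ → ℝ × ℝ) (hTm : Measurable T) (hTX : ∀ z ∈ X, T z ∈ X)
    (M : (ℝ × ℝ) × (ℝ × ℝ) → ℝ × ℝ) (hMm : Measurable M)
    (hMX : ∀ p ∈ X, ∀ q ∈ X, M (p, q) ∈ X)
    (S : ℝ × ℝ → ℝ × ℝ) (hS : S = fun z => M (z, T z))
    (hpushT : Measure.map T μ₀ = μ₁)
    -- the midpoint measure, absolutely continuous with Lebesgue density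
    (μhalf : Measure (ℝ × ℝ)) (hμhalf : μhalf = Measure.map S μ₀)
    (ρhalf : ℝ × ℝ → ℝ) (hρhm : Measurable ρhalf) (hρh0 : ∀ z, 0 ≤ ρhalf z)
    (hμhd : μhalf = volume.withDensity fun z => ENNReal.ofReal (ρhalf z))
    -- injectivity outside a null set
    (hinjT : ∃ N : Set (ℝ × ℝ), μ₀ N = 0 ∧ Set.InjOn T Nᶜ)
    (hinjS : ∃ N : Set (ℝ × ℝ), μ₀ N = 0 ∧ Set.InjOn S Nᶜ)
    -- the Jacobi equations
    (JT JS : ℝ × ℝ → ℝ) (hJTm : Measurable JT) (hJSm : Measurable JS)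
    (hJT0 : ∀ z, 0 ≤ JT z) (hJS0 : ∀ z, 0 ≤ JS z)
    (hJacT : ∀ᵐ z ∂μ₀, ρ₁ (T z) * JT z = ρ₀ z)
    (hJacS : ∀ᵐ z ∂μ₀, ρhalf (S z) * JS z = ρ₀ z)
    -- the pointwise logarithmic inequality
    (hlog : ∀ᵐ z ∂μ₀,
      Real.log (mdens (S z) * JS z) ≥
        (1 / 2) * Real.log (mdens (T z) * JT z) + (1 / 2) * Real.log (mdens z))
    -- the weight function g
    (g : ℝ × ℝ → ℝ) (hgm : Measurable g) (hg0 : ∀ z, 0 ≤ g z)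
    (hgbd : ∃ C : ℝ, ∀ z, g z ≤ C)
    (hgint : (∫ z, g z ∂μ₀) = 1) :
    Ent m (Measure.map S (μ₀.withDensity fun z => ENNReal.ofReal (g z))) ≤
      ((1 / 2 : ℝ) : EReal) * Ent m (μ₀.withDensity fun z => ENNReal.ofReal (g z)) +
      ((1 / 2 : ℝ) : EReal) *
        Ent m (Measure.map T (μ₀.withDensity fun z => ENNReal.ofReal (g z))) := by
  have hf'mono : Monotone f' := monotone_of_hasDerivAt_nonneg hfd2 hφ0
  have hfcont : Continuous f := continuous_iff_continuousAt.2 fun x => (hfd x).continuousAt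
  have hfmono : MonotoneOn f (Set.Ici (-1)) := by
    apply monotoneOn_of_deriv_nonneg (convex_Ici _) hfcont.continuousOn
      (fun x _ => (hfd x).differentiableAt.differentiableWithinAt)
    intro x hx
    rw [interior_Ici] at hx
    rw [(hfd x).deriv, ← hf'm1]
    exact hf'mono (le_of_lt hx)
  have hfε : ∀ x, -1 ≤ x → ε ≤ f x := fun x hx => by
    rw [← hfm1]; exact hfmono (Set.mem_Ici.2 le_rfl) hx hx
  have hXm : MeasurableSet X := by
    rw [hX]
    refine (measurable_fst measurableSet_Icc).inter ?_
    exact (measurableSet_le measurable_const measurable_snd).inter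
      (measurableSet_le measurable_snd (hfcont.measurable.comp measurable_fst))
  have hmdm : Measurable mdens := by
    have := hfcont.measurable
    rw [hmdens]; fun_prop
  have hmdpos : ∀ z ∈ X, 0 < mdens z := by
    intro z hz
    rw [hX] at hz
    have := hε.trans_le (hfε z.1 hz.1.1)
    rw [hmdens]
    positivity
  have hmdle : ∀ z ∈ X, mdens z ≤ 1 / ε := by
    intro z hz
    rw [hX] at hz
    have h1 := hfε z.1 hz.1.1
    have h2 := hε.trans_le h1
    rw [hmdens]
    have h3 : Real.exp (-K * (z.2 / f z.1) ^ 2) ≤ 1 := by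
      rw [Real.exp_le_one_iff]
      nlinarith [sq_nonneg (z.2 / f z.1)]
    calc (1 / f z.1) * Real.exp (-K * (z.2 / f z.1) ^ 2) ≤ (1 / f z.1) * 1 := by gcongr
      _ ≤ 1 / ε := by rw [mul_one]; gcongr
  have hXfin : volume X < ⊤ := by
    have : X ⊆ Set.Icc (-1 : ℝ) 1 ×ˢ Set.Icc 0 (f 1) := by
      rw [hX]
      intro z hz
      refine ⟨hz.1, hz.2.1, hz.2.2.trans ?_⟩
      exact hfmono hz.1.1 (by simp) hz.1.2
    exact (measure_mono this).trans_lt (isCompact_Icc.prod isCompact_Icc).measure_lt_top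
  set r : Measure (ℝ × ℝ) := volume.restrict X with hr
  have hm' : m = r.withDensity fun z => ENNReal.ofReal (mdens z) := by
    rw [hm, withDensity_indicator hXm]
  have hrX : ∀ᵐ z ∂r, z ∈ X := ae_restrict_mem hXm
  have hrpos : ∀ᵐ z ∂r, 0 < mdens z := hrX.mono hmdpos
  have hmr : m ≪ r := by rw [hm']; exact withDensity_absolutelyContinuous _ _
  have : IsFiniteMeasure r := ⟨by simpa [hr] using hXfin⟩
  have : IsFiniteMeasure m := by
    rw [hm']
    apply isFiniteMeasure_withDensity
    refine ne_of_lt (lt_of_le_of_lt (b := ∫⁻ _, ENNReal.ofReal (1 / ε) ∂r)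
      (lintegral_mono_ae (hrX.mono fun z hz => ENNReal.ofReal_le_ofReal (hmdle z hz))) ?_)
    rw [lintegral_const]
    exact ENNReal.mul_lt_top ENNReal.ofReal_lt_top (measure_lt_top _ _)
  have hX0 : ∀ᵐ z ∂μ₀, z ∈ X := (hac₀.trans hmr).ae_le hrX
  have hSm : Measurable S := by rw [hS]; exact hMm.comp (measurable_id.prodMk hTm)
  have hSX : ∀ z ∈ X, S z ∈ X := by
    intro z hz; rw [hS]; exact hMX z hz _ (hTX z hz)
  have hXmap : ∀ R : ℝ × ℝ → ℝ × ℝ, Measurable R → (∀ z ∈ X, R z ∈ X) →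
      ∀ᵐ z ∂(Measure.map R μ₀), z ∈ X := by
    intro R hR hRX
    rw [ae_map_iff (p := fun z => z ∈ X) hR.aemeasurable hXm]
    exact hX0.mono hRX
  have hgI : Integrable g μ₀ := by
    by_contra hcon
    rw [integral_undef hcon] at hgint
    exact zero_ne_one hgint
  set ν : Measure (ℝ × ℝ) := μ₀.withDensity fun z => ENNReal.ofReal (g z) with hν
  have : IsFiniteMeasure ν := isFiniteMeasure_withDensity_ofReal hgI.2
  have hνμ : ν ≪ μ₀ := withDensity_absolutelyContinuous _ _
  obtain ⟨acT, lT⟩ := aux_llr_s8 r m μ₀ mdens ρ₁ g hmdm hρ₁m hgm hrpos hρ₁0 hg0 hm' T hTm hinjT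
    (aux_ac X _ hXm _ (hpushT.trans hμ₁) (hXmap T hTm hTX)) ν hν
  obtain ⟨acS, lS⟩ := aux_llr_s8 r m μ₀ mdens ρhalf g hmdm hρhm hgm hrpos hρh0 hg0 hm' S hSm hinjS
    (aux_ac X _ hXm _ (hμhalf.symm.trans hμhd) (hXmap S hSm hSX)) ν hν
  obtain ⟨acI, lI⟩ := aux_llr_s8 r m μ₀ mdens ρ₀ g hmdm hρ₀m hgm hrpos hρ₀0 hg0 hm' id measurable_id
    ⟨∅, by simp, Function.injective_id.injOn⟩
    (by rw [Measure.map_id]; exact aux_ac X _ hXm _ hμ₀ hX0) ν hν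
  rw [Measure.map_id] at acI lI
  have hρpos : ∀ᵐ z ∂μ₀, 0 < ρ₀ z := by
    rw [hμ₀, ae_withDensity_iff hρ₀m.ennreal_ofReal]
    refine Filter.Eventually.of_forall fun z hz => ?_
    simpa using hz
  have hgpos : ∀ᵐ z ∂ν, 0 < g z := by
    rw [hν, ae_withDensity_iff hgm.ennreal_ofReal]
    refine Filter.Eventually.of_forall fun z hz => ?_
    simpa using hz
  have key : ∀ᵐ z ∂ν, llr (Measure.map S ν) m (S z) ≤
      (1 / 2) * llr ν m z + (1 / 2) * llr (Measure.map T ν) m (T z) := by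
    filter_upwards [lT, lS, lI, hgpos, hνμ.ae_le hρpos, hνμ.ae_le hX0, hνμ.ae_le hJacT,
      hνμ.ae_le hJacS, hνμ.ae_le hlog] with z eT eS eI g0 p0 zX jT jS hl
    simp only [id] at eI
    rw [eT, eS, eI]
    have mz := hmdpos z zX
    have mT := hmdpos _ (hTX z zX)
    have mS := hmdpos _ (hSX z zX)
    have pT : 0 < ρ₁ (T z) := lt_of_le_of_ne (hρ₁0 _) fun h => by
      rw [← h, zero_mul] at jT; exact p0.ne jT
    have pS : 0 < ρhalf (S z) := lt_of_le_of_ne (hρh0 _) fun h => by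
      rw [← h, zero_mul] at jS; exact p0.ne jS
    have qT : 0 < JT z := lt_of_le_of_ne (hJT0 _) fun h => by
      rw [← h, mul_zero] at jT; exact p0.ne jT
    have qS : 0 < JS z := lt_of_le_of_ne (hJS0 _) fun h => by
      rw [← h, mul_zero] at jS; exact p0.ne jS
    have lT' : Real.log (ρ₁ (T z)) + Real.log (JT z) = Real.log (ρ₀ z) := by
      rw [← jT, Real.log_mul pT.ne' qT.ne']
    have lS' : Real.log (ρhalf (S z)) + Real.log (JS z) = Real.log (ρ₀ z) := by
      rw [← jS, Real.log_mul pS.ne' qS.ne']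
    rw [Real.log_mul mS.ne' qS.ne', Real.log_mul mT.ne' qT.ne'] at hl
    rw [Real.log_div (by positivity) mS.ne', Real.log_div (by positivity) mT.ne',
      Real.log_div (by positivity) mz.ne', Real.log_mul g0.ne' pS.ne',
      Real.log_mul g0.ne' pT.ne', Real.log_mul g0.ne' p0.ne']
    linarith
  have htop : ((1 / 2 : ℝ) : EReal) * ⊤ = ⊤ := EReal.coe_mul_top_of_pos (by norm_num)
  have hnb : ∀ η : Measure (ℝ × ℝ), ((1 / 2 : ℝ) : EReal) * Ent m η ≠ ⊥ := by
    intro η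
    unfold Ent
    split_ifs
    · rw [← EReal.coe_mul]; exact EReal.coe_ne_bot _
    · rw [htop]; simp
  by_cases iI : Integrable (llr ν m) ν
  swap
  · have : Ent m ν = ⊤ := by rw [Ent, if_neg (fun h => iI h.2)]
    rw [this, htop, EReal.top_add_of_ne_bot (hnb _)]
    exact le_top
  by_cases iT : Integrable (llr (Measure.map T ν) m) (Measure.map T ν)
  swap
  · have : Ent m (Measure.map T ν) = ⊤ := by rw [Ent, if_neg (fun h => iT h.2)]
    rw [this, htop, EReal.add_top_of_ne_bot (hnb _)]
    exact le_top
  have mlT := (measurable_llr (Measure.map T ν) m)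
  have mlS := (measurable_llr (Measure.map S ν) m)
  have iT' : Integrable (fun z => llr (Measure.map T ν) m (T z)) ν := iT.comp_measurable hTm
  have iN : Integrable (fun z => max (-(llr (Measure.map S ν) m (S z))) 0) ν :=
    (aux_neg m (Measure.map S ν) acS).comp_measurable hSm
  have iG : Integrable (fun z => (1 / 2) * llr ν m z +
      (1 / 2) * llr (Measure.map T ν) m (T z)) ν := (iI.const_mul _).add (iT'.const_mul _)
  have iS' : Integrable (fun z => llr (Measure.map S ν) m (S z)) ν := by
    refine (iG.abs.add iN).mono' (mlS.comp hSm).aestronglyMeasurable ?_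
    filter_upwards [key] with z hz
    simp only [Pi.add_apply, Real.norm_eq_abs]
    rw [abs_le]
    constructor
    · have h1 := le_max_left (-(llr (Measure.map S ν) m (S z))) 0
      have h2 := abs_nonneg ((1 / 2) * llr ν m z + (1 / 2) * llr (Measure.map T ν) m (T z))
      linarith
    · have h1 := le_max_right (-(llr (Measure.map S ν) m (S z))) 0
      have h2 := le_abs_self ((1 / 2) * llr ν m z + (1 / 2) * llr (Measure.map T ν) m (T z))
      linarith
  have iS : Integrable (llr (Measure.map S ν) m) (Measure.map S ν) :=
    (integrable_map_measure mlS.aestronglyMeasurable hSm.aemeasurable).2 iS'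
  rw [Ent, Ent, Ent, if_pos ⟨acS, iS⟩, if_pos ⟨acI, iI⟩, if_pos ⟨acT, iT⟩,
    ← EReal.coe_mul, ← EReal.coe_mul, ← EReal.coe_add, EReal.coe_le_coe_iff,
    integral_map hSm.aemeasurable mlS.aestronglyMeasurable,
    integral_map hTm.aemeasurable mlT.aestronglyMeasurable,
    ← integral_const_mul, ← integral_const_mul,
    ← integral_add (iI.const_mul _) (iT'.const_mul _)]
  exact integral_mono_ae iS' iG key
end

section
/- There exists k₀ > 0 such that for all ε, k with 0 < ε < k < k₀ the following holds. Let (x₀,y₀),(x₁,y₁) ∈ X with x₀ ≠ x₁ and |y₁−y₀| ≤ (1/2)·|x₁−x₀|. Then the point p = ( (x₀+x₁)/2 , (1/2)·(y₀/f(x₀) + y₁/f(x₁))·f((x₀+x₁)/2) ) belongs to X and is a d_∞-midpoint of (x₀,y₀) and (x₁,y₁): d_∞(p,(x₀,y₀)) = d_∞(p,(x₁,y₁)) = (1/2)·d_∞((x₀,y₀),(x₁,y₁)) = (1/2)·|x₁−x₀|. -/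
theorem core_aux (a b c h y z : ℝ) (ha : 0 < a) (hab : a ≤ b) (hbc : b ≤ c) (hh : 0 ≤ h)
    (h1 : b - a ≤ h / 4) (h2 : c - b ≤ h / 4) (hy : 0 ≤ y) (hya : y ≤ a) (hz : 0 ≤ z) (hzc : z ≤ c)
    (hyz : |z - y| ≤ h) :
    0 ≤ (1 / 2) * (y / a + z / c) * b ∧ (1 / 2) * (y / a + z / c) * b ≤ b ∧
    |(1 / 2) * (y / a + z / c) * b - y| ≤ h ∧ |(1 / 2) * (y / a + z / c) * b - z| ≤ h := by
  have hb : 0 < b := by linarith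
  have hc : 0 < c := by linarith
  obtain ⟨t, ht⟩ : ∃ t, t = y / a := ⟨_, rfl⟩
  obtain ⟨s, hs⟩ : ∃ s, s = z / c := ⟨_, rfl⟩
  have ht0 : 0 ≤ t := by rw [ht]; positivity
  have hs0 : 0 ≤ s := by rw [hs]; positivity
  have ht1 : t ≤ 1 := by rw [ht]; exact (div_le_one ha).2 hya
  have hs1 : s ≤ 1 := by rw [hs]; exact (div_le_one hc).2 hzc
  have ey : y = t * a := by rw [ht]; field_simp
  have ez : z = s * c := by rw [hs]; field_simp
  rw [← ht, ← hs]
  clear ht hs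
  subst ey ez
  rw [abs_le] at hyz
  have e1 : t * (b - a) ≤ h / 4 := by nlinarith
  have e1' : 0 ≤ t * (b - a) := mul_nonneg ht0 (by linarith)
  have e2 : s * (c - b) ≤ h / 4 := by nlinarith
  have e2' : 0 ≤ s * (c - b) := mul_nonneg hs0 (by linarith)
  have e3 : t * (c - b) ≤ h / 4 := by nlinarith
  have e3' : 0 ≤ t * (c - b) := mul_nonneg ht0 (by linarith)
  have e4 : |(s - t) * c| ≤ 3 * h / 2 := by
    rw [abs_le]; constructor <;> nlinarith
  have e5 : |(s - t) * b| ≤ 3 * h / 2 := by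
    refine le_trans ?_ e4
    rw [abs_mul, abs_mul, abs_of_pos hb, abs_of_pos hc]
    exact mul_le_mul_of_nonneg_left hbc (abs_nonneg _)
  rw [abs_le] at e5
  refine ⟨by positivity, by nlinarith, ?_, ?_⟩ <;> rw [abs_le] <;> constructor <;> nlinarith

theorem core_f (k : ℝ) (hk0 : 0 < k) (hk : k < 1 / 4) (φ : ℝ → ℝ) (hc : Continuous φ)
    (h0 : ∀ x, 0 ≤ φ x) (hint : (∫ x, φ x) = k) (f f' : ℝ → ℝ)
    (hf : ∀ x, HasDerivAt f (f' x) x) (hf' : ∀ x, HasDerivAt f' (φ x) x) (h1 : f' (-1) = 0)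
    (x y : ℝ) (hx : -1 ≤ x) (hxy : x ≤ y) : f x ≤ f y ∧ f y - f x ≤ (y - x) / 4 := by
  have hi : MeasureTheory.Integrable φ := by
    by_contra h
    rw [MeasureTheory.integral_undef h] at hint
    linarith
  have hm : Monotone f' := monotone_of_hasDerivAt_nonneg hf' h0
  have hu : ∀ x, -1 ≤ x → f' x ≤ 1 / 4 := by
    intro x hx
    have := intervalIntegral.integral_eq_sub_of_hasDerivAt (a := -1) (b := x)
      (fun u _ => hf' u) (hc.intervalIntegrable _ _)
    rw [intervalIntegral.integral_of_le hx] at this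
    have h2 := MeasureTheory.setIntegral_le_integral (s := Set.Ioc (-1) x) hi
      (Filter.Eventually.of_forall h0)
    linarith
  have hd : Differentiable ℝ f := fun x => (hf x).differentiableAt
  have hC := convex_Ici (𝕜 := ℝ) (-1 : ℝ)
  have a1 := hC.mul_sub_le_image_sub_of_le_deriv (f := f) (C := 0) hd.continuous.continuousOn
    hd.differentiableOn (fun u hu' => by
      rw [interior_Ici] at hu'
      rw [(hf u).deriv, ← h1]; exact hm (le_of_lt hu')) x hx y (le_trans hx hxy) hxy
  have a2 := hC.image_sub_le_mul_sub_of_deriv_le (f := f) (C := 1 / 4) hd.continuous.continuousOn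
    hd.differentiableOn (fun u hu' => by
      rw [interior_Ici] at hu'
      rw [(hf u).deriv]; exact hu u (le_of_lt hu')) x hx y (le_trans hx hxy) hxy
  constructor <;> linarith

theorem stmt_9 :
    ∃ k₀ > (0 : ℝ), ∀ ε k : ℝ, 0 < ε → ε < k → k < k₀ →
    ∀ φ : ℝ → ℝ, Continuous φ → (∀ x, 0 ≤ φ x) → (∀ x, φ x ≤ 1) →
      (∀ x, x ∉ Set.Icc (-k) k → φ x = 0) → (∫ x, φ x) = k →
    ∀ f f' : ℝ → ℝ, (∀ x, HasDerivAt f (f' x) x) → (∀ x, HasDerivAt f' (φ x) x) →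
      f' (-1) = 0 → f (-1) = ε →
    ∀ X : Set (ℝ × ℝ),
      X = {p : ℝ × ℝ | p.1 ∈ Set.Icc (-1 : ℝ) 1 ∧ 0 ≤ p.2 ∧ p.2 ≤ f p.1} →
    ∀ x₀ y₀ x₁ y₁ : ℝ, (x₀, y₀) ∈ X → (x₁, y₁) ∈ X → x₀ ≠ x₁ →
      |y₁ - y₀| ≤ (1 / 2) * |x₁ - x₀| →
    ((((x₀ + x₁) / 2 : ℝ), ((1 / 2) * (y₀ / f x₀ + y₁ / f x₁) * f ((x₀ + x₁) / 2) : ℝ)) ∈ X ∧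
      dist (((x₀ + x₁) / 2 : ℝ), ((1 / 2) * (y₀ / f x₀ + y₁ / f x₁) * f ((x₀ + x₁) / 2) : ℝ))
          ((x₀, y₀) : ℝ × ℝ) = (1 / 2) * dist ((x₀, y₀) : ℝ × ℝ) ((x₁, y₁) : ℝ × ℝ) ∧
      dist (((x₀ + x₁) / 2 : ℝ), ((1 / 2) * (y₀ / f x₀ + y₁ / f x₁) * f ((x₀ + x₁) / 2) : ℝ))
          ((x₁, y₁) : ℝ × ℝ) = (1 / 2) * dist ((x₀, y₀) : ℝ × ℝ) ((x₁, y₁) : ℝ × ℝ) ∧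
      dist ((x₀, y₀) : ℝ × ℝ) ((x₁, y₁) : ℝ × ℝ) = |x₁ - x₀|) := by
  refine ⟨1 / 4, by norm_num, ?_⟩
  intro ε k hε hεk hk φ hc h0 _ _ hint f f' hf hf' h1 hfε X hX x₀ y₀ x₁ y₁ hp hq hne hy
  have key := core_f k (hε.trans hεk) hk φ hc h0 hint f f' hf hf' h1
  have main : ∀ x₀ y₀ x₁ y₁ : ℝ, -1 ≤ x₀ → x₀ < x₁ → 0 ≤ y₀ → y₀ ≤ f x₀ → 0 ≤ y₁ → y₁ ≤ f x₁ →
      |y₁ - y₀| ≤ (1 / 2) * |x₁ - x₀| →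
      0 ≤ (1 / 2) * (y₀ / f x₀ + y₁ / f x₁) * f ((x₀ + x₁) / 2) ∧
      (1 / 2) * (y₀ / f x₀ + y₁ / f x₁) * f ((x₀ + x₁) / 2) ≤ f ((x₀ + x₁) / 2) ∧
      |(1 / 2) * (y₀ / f x₀ + y₁ / f x₁) * f ((x₀ + x₁) / 2) - y₀| ≤ |x₁ - x₀| / 2 ∧
      |(1 / 2) * (y₀ / f x₀ + y₁ / f x₁) * f ((x₀ + x₁) / 2) - y₁| ≤ |x₁ - x₀| / 2 := by
    intro x₀ y₀ x₁ y₁ hx hlt a b c d hy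
    have k1 := key x₀ ((x₀ + x₁) / 2) hx (by linarith)
    have k2 := key ((x₀ + x₁) / 2) x₁ (by linarith) (by linarith)
    have k3 := key (-1) x₀ le_rfl hx
    have e : |x₁ - x₀| = x₁ - x₀ := abs_of_pos (by linarith)
    rw [e] at hy ⊢
    exact core_aux _ _ _ _ _ _ (by linarith) k1.1 k2.1 (by linarith) (by linarith) (by linarith)
      a b c d (by linarith)
  subst hX
  obtain ⟨⟨p1, p2⟩, p3, p4⟩ := hp
  obtain ⟨⟨q1, q2⟩, q3, q4⟩ := hq
  simp only at p1 p2 p3 p4 q1 q2 q3 q4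
  have fin : 0 ≤ (1 / 2) * (y₀ / f x₀ + y₁ / f x₁) * f ((x₀ + x₁) / 2) ∧
      (1 / 2) * (y₀ / f x₀ + y₁ / f x₁) * f ((x₀ + x₁) / 2) ≤ f ((x₀ + x₁) / 2) ∧
      |(1 / 2) * (y₀ / f x₀ + y₁ / f x₁) * f ((x₀ + x₁) / 2) - y₀| ≤ |x₁ - x₀| / 2 ∧
      |(1 / 2) * (y₀ / f x₀ + y₁ / f x₁) * f ((x₀ + x₁) / 2) - y₁| ≤ |x₁ - x₀| / 2 := by
    rcases lt_or_gt_of_ne hne with h | h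
    · exact main x₀ y₀ x₁ y₁ p1 h p3 p4 q3 q4 hy
    · have := main x₁ y₁ x₀ y₀ q1 h q3 q4 p3 p4 (by rwa [abs_sub_comm, abs_sub_comm x₀])
      rw [add_comm x₁, add_comm (y₁ / f x₁), abs_sub_comm x₀] at this
      exact ⟨this.1, this.2.1, this.2.2.2, this.2.2.1⟩
  obtain ⟨r1, r2, r3, r4⟩ := fin
  have hd : dist ((x₀, y₀) : ℝ × ℝ) ((x₁, y₁) : ℝ × ℝ) = |x₁ - x₀| := by
    rw [Prod.dist_eq, Real.dist_eq, Real.dist_eq, abs_sub_comm x₀, abs_sub_comm y₀]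
    exact max_eq_left (by linarith [abs_nonneg (x₁ - x₀)])
  have m0 : |(x₀ + x₁) / 2 - x₀| = |x₁ - x₀| / 2 := by
    rw [show (x₀ + x₁) / 2 - x₀ = (x₁ - x₀) / 2 by ring, abs_div, abs_two]
  have m1 : |(x₀ + x₁) / 2 - x₁| = |x₁ - x₀| / 2 := by
    rw [show (x₀ + x₁) / 2 - x₁ = (x₀ - x₁) / 2 by ring, abs_div, abs_two, abs_sub_comm]
  refine ⟨⟨⟨?_, ?_⟩, r1, r2⟩, ?_, ?_, hd⟩
  · show -1 ≤ (x₀ + x₁) / 2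
    linarith
  · show (x₀ + x₁) / 2 ≤ 1
    linarith
  · rw [hd, Prod.dist_eq, Real.dist_eq, Real.dist_eq]
    simp only
    rw [m0, max_eq_left r3]; ring
  · rw [hd, Prod.dist_eq, Real.dist_eq, Real.dist_eq]
    simp only
    rw [m1, max_eq_left r4]; ring
end

section
/- There exists k₀ > 0 such that for all ε, k with 0 < ε < k < k₀ the following holds. Let (x₀,y₀),(x₁,y₁) ∈ X with x₀ < x₁ and (1/2)·(x₁−x₀) < y₁−y₀ < x₁−x₀. Set ỹ = (1/2)·( y₀/f(x₀) + (y₀ + (x₁−x₀)/2)/f(x₁) )·f((x₀+x₁)/2) − y₀ and ȳ = y₀ + ỹ + ( (x₁−x₀)/2 − ỹ )·( 2·(y₁−y₀)/(x₁−x₀) − 1 ). Then the point p = ((x₀+x₁)/2, ȳ) belongs to X and is a d_∞-midpoint of (x₀,y₀) and (x₁,y₁): d_∞(p,(x₀,y₀)) = d_∞(p,(x₁,y₁)) = (1/2)·d_∞((x₀,y₀),(x₁,y₁)) = (1/2)·(x₁−x₀). -/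
theorem stmt_10 :
    ∃ k₀ > (0 : ℝ), ∀ ε k : ℝ, 0 < ε → ε < k → k < k₀ →
    ∀ φ : ℝ → ℝ, Continuous φ → (∀ x, 0 ≤ φ x) → (∀ x, φ x ≤ 1) →
      (∀ x, x ∉ Set.Icc (-k) k → φ x = 0) → (∫ x, φ x) = k →
    ∀ f f' : ℝ → ℝ, (∀ x, HasDerivAt f (f' x) x) → (∀ x, HasDerivAt f' (φ x) x) →
      f' (-1) = 0 → f (-1) = ε →
    ∀ X : Set (ℝ × ℝ),
      X = {p : ℝ × ℝ | p.1 ∈ Set.Icc (-1 : ℝ) 1 ∧ 0 ≤ p.2 ∧ p.2 ≤ f p.1} →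
    ∀ x₀ y₀ x₁ y₁ : ℝ, (x₀, y₀) ∈ X → (x₁, y₁) ∈ X → x₀ < x₁ →
      (1 / 2) * (x₁ - x₀) < y₁ - y₀ → y₁ - y₀ < x₁ - x₀ →
    ∀ ytilde ybar : ℝ,
      ytilde = (1 / 2) * (y₀ / f x₀ + (y₀ + (x₁ - x₀) / 2) / f x₁) * f ((x₀ + x₁) / 2) - y₀ →
      ybar = y₀ + ytilde + ((x₁ - x₀) / 2 - ytilde) * (2 * (y₁ - y₀) / (x₁ - x₀) - 1) →
    ((((x₀ + x₁) / 2 : ℝ), ybar) ∈ X ∧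
      dist (((x₀ + x₁) / 2 : ℝ), ybar) ((x₀, y₀) : ℝ × ℝ) =
        (1 / 2) * dist ((x₀, y₀) : ℝ × ℝ) ((x₁, y₁) : ℝ × ℝ) ∧
      dist (((x₀ + x₁) / 2 : ℝ), ybar) ((x₁, y₁) : ℝ × ℝ) =
        (1 / 2) * dist ((x₀, y₀) : ℝ × ℝ) ((x₁, y₁) : ℝ × ℝ) ∧
      dist ((x₀, y₀) : ℝ × ℝ) ((x₁, y₁) : ℝ × ℝ) = x₁ - x₀) := by
  refine ⟨1/10, by norm_num, ?_⟩
  intro ε k hε hεk hk φ hφc hφ0 hφ1 hφs hφi f f' hf hf' hf'0 hf0 X hX x₀ y₀ x₁ y₁ h0 h1 hx hy1 hy2 yt yb hyt hyb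
  subst hX
  obtain ⟨⟨a0, a1⟩, a2, a3⟩ := h0
  obtain ⟨⟨b0, b1⟩, b2, b3⟩ := h1
  dsimp only at a0 a1 a2 a3 b0 b1 b2 b3
  have hk0 : 0 < k := hε.trans hεk
  have hint : MeasureTheory.Integrable φ := by
    by_contra h
    rw [MeasureTheory.integral_undef h] at hφi
    linarith
  have hf'eq : ∀ x, f' x = ∫ t in (-1)..x, φ t := by
    intro x
    rw [intervalIntegral.integral_eq_sub_of_hasDerivAt (f := f') (fun y _ => hf' y)
      (hφc.intervalIntegrable _ _), hf'0, sub_zero]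
  have hpos : ∀ x, -1 ≤ x → 0 ≤ f' x := by
    intro x hx
    rw [hf'eq]
    exact intervalIntegral.integral_nonneg hx (fun y _ => hφ0 y)
  have hle : ∀ x, -1 ≤ x → f' x ≤ k := by
    intro x hx
    rw [hf'eq, intervalIntegral.integral_of_le hx, ← hφi]
    exact MeasureTheory.setIntegral_le_integral hint (Filter.Eventually.of_forall hφ0)
  have inc : ∀ a b, -1 ≤ a → a ≤ b → f a ≤ f b ∧ f b ≤ f a + k * (b - a) := by
    intro a b ha hab
    have hfc : ContinuousOn f (Set.Icc a b) := fun x _ => (hf x).continuousAt.continuousWithinAt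
    have hfd : DifferentiableOn ℝ f (interior (Set.Icc a b)) :=
      fun x _ => (hf x).differentiableAt.differentiableWithinAt
    have u := (convex_Icc a b).mul_sub_le_image_sub_of_le_deriv hfc hfd (C := 0)
      (fun x hx => by
        rw [(hf x).deriv]
        exact hpos x (ha.trans (interior_subset hx).1)) a ⟨le_refl _, hab⟩ b ⟨hab, le_refl _⟩ hab
    have v := (convex_Icc a b).image_sub_le_mul_sub_of_deriv_le hfc hfd (C := k)
      (fun x hx => by
        rw [(hf x).deriv]
        exact hle x (ha.trans (interior_subset hx).1)) a ⟨le_refl _, hab⟩ b ⟨hab, le_refl _⟩ hab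
    constructor <;> linarith
  obtain ⟨c1, -⟩ := inc (-1) x₀ le_rfl a0
  obtain ⟨c2, c3⟩ := inc x₀ ((x₀ + x₁) / 2) a0 (by linarith)
  obtain ⟨c4, c5⟩ := inc ((x₀ + x₁) / 2) x₁ (by linarith) (by linarith)
  obtain ⟨L, hL⟩ : ∃ L, L = (x₁ - x₀) / 2 := ⟨_, rfl⟩
  have hLpos : 0 < L := by linarith
  have e1 : (x₀ + x₁) / 2 - x₀ = L := by rw [hL]; ring
  have e2 : x₁ - (x₀ + x₁) / 2 = L := by rw [hL]; ring
  rw [e1] at c3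
  rw [e2] at c5
  generalize hm : f ((x₀ + x₁) / 2) = m at *
  have g0 : 0 < f x₀ := by linarith
  have g1 : 0 < f x₁ := by linarith
  have hkL : 0 < k * L := mul_pos hk0 hLpos
  have hkL' : k * L < L / 10 := by
    have := mul_lt_mul_of_pos_right hk hLpos
    linarith
  obtain ⟨A, hA⟩ : ∃ A, A = m / f x₀ := ⟨_, rfl⟩
  obtain ⟨B, hB⟩ : ∃ B, B = m / f x₁ := ⟨_, rfl⟩
  have hA1 : 1 ≤ A := by rw [hA, le_div_iff₀ g0]; linarith
  have hB1 : B ≤ 1 := by rw [hB, div_le_iff₀ g1]; linarith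
  have hBk : 1 - k ≤ B := by
    rw [hB, le_div_iff₀ g1]
    have := mul_le_mul_of_nonneg_left (show L ≤ f x₁ by linarith) hk0.le
    linarith
  have p0 : 0 ≤ y₀ * (A - 1) := mul_nonneg a2 (by linarith)
  have q0 : 0 ≤ y₀ * (1 - B) := mul_nonneg a2 (by linarith)
  have p1 : y₀ * (A - 1) ≤ k * L := by
    have : f x₀ * (A - 1) = m - f x₀ := by rw [hA]; field_simp
    have := mul_le_mul_of_nonneg_right a3 (show 0 ≤ A - 1 by linarith)
    linarith
  have q1 : y₀ * (1 - B) ≤ k * L := by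
    have : f x₁ * (1 - B) = f x₁ - m := by rw [hB]; field_simp
    have := mul_le_mul_of_nonneg_right (show y₀ ≤ f x₁ by linarith) (show 0 ≤ 1 - B by linarith)
    linarith
  have hyt' : yt = (y₀ * (A - 1) - y₀ * (1 - B) + L * B) / 2 := by
    rw [hyt, ← hL, hA, hB]; field_simp; ring
  have hLB : L * B ≤ L := mul_le_of_le_one_right hLpos.le hB1
  have hLB' : L - k * L ≤ L * B := by
    have := mul_le_mul_of_nonneg_left hBk hLpos.le
    linarith
  have t0 : 0 ≤ yt := by linarith
  have t1 : yt ≤ (L + k * L) / 2 := by linarith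
  obtain ⟨t, ht⟩ : ∃ t, t = 2 * (y₁ - y₀) / (x₁ - x₀) - 1 := ⟨_, rfl⟩
  have htL : y₁ = y₀ + (1 + t) * L := by
    have : x₁ - x₀ ≠ 0 := by linarith
    rw [ht, hL]; field_simp; ring
  rw [← hL, ← ht] at hyb
  have tp : 0 < t := by
    by_contra h
    have := mul_nonneg (show 0 ≤ -t by linarith) hLpos.le
    linarith
  have tl : t < 1 := by
    by_contra h
    have := mul_nonneg (show 0 ≤ t - 1 by linarith) hLpos.le
    linarith
  have w0 : 0 ≤ (1 - t) * yt := mul_nonneg (by linarith) t0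
  have w1 : (1 - t) * yt ≤ yt := mul_le_of_le_one_left t0 (by linarith)
  have w2 : (1 - t) * yt ≤ (1 - t) * L := mul_le_mul_of_nonneg_left (by linarith) (by linarith)
  have w3 : 0 < t * L := mul_pos tp hLpos
  have hyb' : yb = y₀ + (1 - t) * yt + t * L := by rw [hyb]; ring
  have hd : dist ((x₀, y₀) : ℝ × ℝ) ((x₁, y₁) : ℝ × ℝ) = x₁ - x₀ := by
    rw [Prod.dist_eq, Real.dist_eq, Real.dist_eq, abs_sub_comm, abs_of_pos (by simpa using hx),
      abs_sub_comm, abs_of_pos (by dsimp only; linarith)]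
    exact max_eq_left hy2.le
  refine ⟨⟨⟨by dsimp only; linarith, by dsimp only; linarith⟩, by dsimp only; linarith, ?_⟩, ?_, ?_, hd⟩
  · dsimp only
    rw [hm]
    linarith
  · rw [hd, Prod.dist_eq, Real.dist_eq, Real.dist_eq]
    dsimp only
    rw [e1, abs_of_pos hLpos, max_eq_left]
    · linarith
    · rw [abs_le]
      constructor <;> linarith
  · rw [hd, Prod.dist_eq, Real.dist_eq, Real.dist_eq]
    dsimp only
    rw [abs_sub_comm, e2, abs_of_pos hLpos, max_eq_left]
    · linarith
    · rw [abs_le]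
      constructor <;> linarith
end

section
/- There exists k₀ ∈ (0,1/4) such that for all ε, k with 0 < ε < k < k₀ the following holds. Fix x < x' in [−1,1] and y' ∈ [0, f(x')], and for y ≥ 0 with (x,y) ∈ X and (1/2)·(x'−x) < y'−y < x'−x define ỹ(y) = (1/2)·( y/f(x) + (y + (x'−x)/2)/f(x') )·f((x+x')/2) − y and G(y) = y + ỹ(y) + ( (x'−x)/2 − ỹ(y) )·( 2·(y'−y)/(x'−x) − 1 ). Then G is differentiable with G'(y) ≥ 1/2 − 3k − (2k² + 3k)/(1−2k)² > 0; in particular G is strictly increasing on this set of y. -/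
lemma aux_bounds (k : ℝ) (hk : 0 < k) (φ : ℝ → ℝ) (hc : Continuous φ) (h0 : ∀ x, 0 ≤ φ x)
    (hs : ∀ x, x ∉ Set.Icc (-k) k → φ x = 0) (hI : (∫ x, φ x) = k)
    (f f' : ℝ → ℝ) (hf : ∀ x, HasDerivAt f (f' x) x) (hf' : ∀ x, HasDerivAt f' (φ x) x)
    (h1 : f' (-1) = 0) (u v : ℝ) (hu : -1 ≤ u) (huv : u ≤ v) :
    f u ≤ f v ∧ f v - f u ≤ k * (v - u) := by
  have hint : MeasureTheory.Integrable φ :=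
    hc.integrable_of_hasCompactSupport (HasCompactSupport.intro isCompact_Icc hs)
  have hB : ∀ x, -1 ≤ x → 0 ≤ f' x ∧ f' x ≤ k := by
    intro x hx
    have e : ∫ t in (-1 : ℝ)..x, φ t = f' x - f' (-1) :=
      intervalIntegral.integral_eq_sub_of_hasDerivAt (fun t _ => hf' t)
        (hc.intervalIntegrable _ _)
    rw [h1, sub_zero] at e
    constructor
    · rw [← e]
      exact intervalIntegral.integral_nonneg hx (fun t _ => h0 t)
    · rw [← e, intervalIntegral.integral_of_le hx, ← hI]
      exact MeasureTheory.setIntegral_le_integral hint (Filter.Eventually.of_forall h0)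
  have hd : Differentiable ℝ f := fun x => (hf x).differentiableAt
  have hcv : Convex ℝ (Set.Ici (-1 : ℝ)) := convex_Ici _
  constructor
  · refine monotoneOn_of_deriv_nonneg hcv hd.continuous.continuousOn hd.differentiableOn ?_
      hu (le_trans hu huv) huv
    intro x hx
    rw [(hf x).deriv]
    exact (hB x (interior_subset hx)).1
  · refine hcv.image_sub_le_mul_sub_of_deriv_le hd.continuous.continuousOn hd.differentiableOn ?_
      u hu v (le_trans hu huv) huv
    intro x hx
    rw [(hf x).deriv]
    exact (hB x (interior_subset hx)).2

lemma aux_alg (k a b c h y t : ℝ) (hk : 0 < k) (ha : 0 < a)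
    (hh : 0 < h) (hab : a ≤ b) (hba : b - a ≤ k * h) (hac : a ≤ c) (hhb : h < 2 * b)
    (hy : 0 ≤ y) (hya : y ≤ a) (ht0 : 0 < t) (ht1 : t < 1) :
    1 / 2 - 3 * k ≤ (1 / 2 * (1 / a + 1 / b) * c - 1) * (1 - t)
      + 2 * (1 / 2 * (y / a + (y + h / 2) / b) * c - y) / h := by
  have hb : 0 < b := by linarith
  set D := 1 / 2 * (1 / a + 1 / b) * c - 1 with hD
  have hDl : -(k * h) / (2 * b) ≤ D := by
    have h1 : 1 / 2 * (1 / a + 1 / b) * a ≤ 1 / 2 * (1 / a + 1 / b) * c := by gcongr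
    have h2 : 1 / 2 * (1 / a + 1 / b) * a - 1 = (a - b) / (2 * b) := by field_simp; ring
    have h3 : -(k * h) / (2 * b) ≤ (a - b) / (2 * b) := by gcongr; linarith
    linarith
  have hDk : -k ≤ D := by
    refine le_trans ?_ hDl
    rw [le_div_iff₀ (by positivity)]
    nlinarith
  have e : 2 * (1 / 2 * (y / a + (y + h / 2) / b) * c - y) / h
      = 2 * y / h * D + 1 / 2 * (c / b) := by
    rw [hD]; field_simp; ring
  have hcb : 1 - 2 * k ≤ c / b := by
    rw [le_div_iff₀ hb]; nlinarith
  have hyD : -k ≤ 2 * y / h * D := by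
    have h1 : 2 * y / h * (-(k * h) / (2 * b)) ≤ 2 * y / h * D := by gcongr
    have h2 : 2 * y / h * (-(k * h) / (2 * b)) = -(k * y / b) := by field_simp
    have h3 : k * y / b ≤ k := by
      rw [div_le_iff₀ hb]; nlinarith
    linarith
  rw [e]
  have : -k ≤ D * (1 - t) := by nlinarith
  linarith

theorem stmt_11 :
    ∃ k₀ : ℝ, k₀ ∈ Set.Ioo (0 : ℝ) (1 / 4) ∧ ∀ ε k : ℝ, 0 < ε → ε < k → k < k₀ →
    ∀ φ : ℝ → ℝ, Continuous φ → (∀ x, 0 ≤ φ x) → (∀ x, φ x ≤ 1) →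
      (∀ x, x ∉ Set.Icc (-k) k → φ x = 0) → (∫ x, φ x) = k →
    ∀ f f' : ℝ → ℝ, (∀ x, HasDerivAt f (f' x) x) → (∀ x, HasDerivAt f' (φ x) x) →
      f' (-1) = 0 → f (-1) = ε →
    ∀ x x' : ℝ, x ∈ Set.Icc (-1 : ℝ) 1 → x' ∈ Set.Icc (-1 : ℝ) 1 → x < x' →
    ∀ y' : ℝ, y' ∈ Set.Icc 0 (f x') →
    ∀ G : ℝ → ℝ,
      G = (fun y =>
        y + ((1 / 2) * (y / f x + (y + (x' - x) / 2) / f x') * f ((x + x') / 2) - y) +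
          ((x' - x) / 2 -
            ((1 / 2) * (y / f x + (y + (x' - x) / 2) / f x') * f ((x + x') / 2) - y)) *
            (2 * (y' - y) / (x' - x) - 1)) →
    ∀ S : Set ℝ,
      S = {y : ℝ | 0 ≤ y ∧ y ≤ f x ∧ (1 / 2) * (x' - x) < y' - y ∧ y' - y < x' - x} →
    ((1 : ℝ) / 2 - 3 * k - (2 * k ^ 2 + 3 * k) / (1 - 2 * k) ^ 2 > 0 ∧
      (∀ y ∈ S, ∃ g : ℝ, HasDerivAt G g y ∧
        (1 : ℝ) / 2 - 3 * k - (2 * k ^ 2 + 3 * k) / (1 - 2 * k) ^ 2 ≤ g) ∧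
      StrictMonoOn G S) := by
  refine ⟨1 / 100, by norm_num, ?_⟩
  intro ε k hε hεk hk φ hc h0 _ hs hI f f' hf hf' h1 hfε x x' hx hx' hxx y' hy' G hG S hS
  have hk0 : 0 < k := hε.trans hεk
  have hq : 0 ≤ (2 * k ^ 2 + 3 * k) / (1 - 2 * k) ^ 2 := by positivity
  have hpos : (1 : ℝ) / 2 - 3 * k - (2 * k ^ 2 + 3 * k) / (1 - 2 * k) ^ 2 > 0 := by
    have : (2 * k ^ 2 + 3 * k) / (1 - 2 * k) ^ 2 ≤ 1 / 10 := by
      have : 0 < 1 - 2 * k := by linarith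
      rw [div_le_iff₀ (by positivity)]
      nlinarith
    linarith
  have key := aux_bounds k hk0 φ hc h0 hs hI f f' hf hf' h1
  have ha : 0 < f x := by
    have := (key (-1) x le_rfl hx.1).1
    linarith
  have hab := key x x' hx.1 hxx.le
  have hac := (key x ((x + x') / 2) hx.1 (by linarith)).1
  have hh : 0 < x' - x := by linarith
  have hder : ∀ y, HasDerivAt G ((1 / 2 * (1 / f x + 1 / f x') * f ((x + x') / 2) - 1)
      * (1 - (2 * (y' - y) / (x' - x) - 1))
      + 2 * (1 / 2 * (y / f x + (y + (x' - x) / 2) / f x') * f ((x + x') / 2) - y)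
        / (x' - x)) y := by
    intro y
    have d := hasDerivAt_id' y
    have dT : HasDerivAt (fun y => (1 / 2) * (y / f x + (y + (x' - x) / 2) / f x')
        * f ((x + x') / 2) - y) (1 / 2 * (1 / f x + 1 / f x') * f ((x + x') / 2) - 1) y :=
      ((((d.div_const (f x)).add ((d.add_const ((x' - x) / 2)).div_const (f x'))).const_mul
        (1 / 2)).mul_const (f ((x + x') / 2))).sub d
    have dt : HasDerivAt (fun y => 2 * (y' - y) / (x' - x) - 1) (2 * (-1) / (x' - x)) y :=
      (((d.const_sub y').const_mul 2).div_const (x' - x)).sub_const 1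
    have := (d.add dT).add ((dT.const_sub ((x' - x) / 2)).mul dt)
    rw [hG]
    refine this.congr_deriv ?_
    generalize 1 / 2 * (1 / f x + 1 / f x') * f ((x + x') / 2) - 1 = D
    generalize 1 / 2 * (y / f x + (y + (x' - x) / 2) / f x') * f ((x + x') / 2) - y = T
    field_simp
    ring
  have hbd : ∀ y ∈ S, (1 : ℝ) / 2 - 3 * k - (2 * k ^ 2 + 3 * k) / (1 - 2 * k) ^ 2 ≤
      (1 / 2 * (1 / f x + 1 / f x') * f ((x + x') / 2) - 1)
      * (1 - (2 * (y' - y) / (x' - x) - 1))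
      + 2 * (1 / 2 * (y / f x + (y + (x' - x) / 2) / f x') * f ((x + x') / 2) - y)
        / (x' - x) := by
    intro y hy
    rw [hS] at hy
    obtain ⟨hy0, hya, hy1, hy2⟩ := hy
    have hyb := hy'.2
    have := aux_alg k (f x) (f x') (f ((x + x') / 2)) (x' - x) y (2 * (y' - y) / (x' - x) - 1)
      hk0 ha hh hab.1 hab.2 hac (by linarith) hy0 hya
      (by rw [sub_pos, lt_div_iff₀ hh]; linarith)
      (by rw [sub_lt_iff_lt_add, div_lt_iff₀ hh]; linarith)
    linarith
  refine ⟨hpos, fun y hy => ⟨_, hder y, hbd y hy⟩, ?_⟩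
  have hconv : Convex ℝ S := by
    have : S.OrdConnected := by
      refine ⟨?_⟩
      rw [hS]
      rintro u ⟨_, _, _, _⟩ v ⟨_, _, _, _⟩ w ⟨_, _⟩
      refine ⟨?_, ?_, ?_, ?_⟩ <;> linarith
    exact this.convex
  refine strictMonoOn_of_deriv_pos hconv
    (fun y _ => (hder y).continuousAt.continuousWithinAt) ?_
  intro y hy
  rw [(hder y).deriv]
  exact lt_of_lt_of_le hpos (hbd y (interior_subset hy))
end

section
/- Let x < x' in [−1,1] and let y satisfy 0 ≤ y ≤ f(x) and y + (x'−x)/2 ≤ f(x'). Set ỹ = (1/2)·( y/f(x) + (y + (x'−x)/2)/f(x') )·f((x+x')/2) − y. Then |ỹ − (x'−x)/4| ≤ (2k² + 4k)·((x'−x)/2)² / f(x'). -/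
theorem aux_alg_s12 (k h y A B M : ℝ) (hk0 : 0 < k) (hh0 : 0 < h) (hA : 0 < A) (hy0 : 0 ≤ y)
    (hyf : y ≤ A) (i1 : 0 ≤ M - A) (i2 : M - A ≤ k * h) (i3 : 0 ≤ B - M) (i4 : B - M ≤ k * h)
    (hM3 : M ≤ 3 * k) (c1 : 0 ≤ A + B - 2 * M) (c3 : A + B - 2 * M ≤ h ^ 2) :
    |1 / 2 * (y / A + (y + h) / B) * M - y - h / 2| ≤ (2 * k ^ 2 + 4 * k) * h ^ 2 / B := by
  have hB : 0 < B := by linarith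
  have hM : 0 < M := by linarith
  have key : 1 / 2 * (y / A + (y + h) / B) * M - y - h / 2
      = ((y / A) * (2 * (M - A) * (B - M) - M * (A + B - 2 * M)) / 2 - h / 2 * (B - M)) / B := by
    field_simp
    ring
  have hr0 : 0 ≤ y / A := by positivity
  have hr1 : y / A ≤ 1 := (div_le_one hA).2 hyf
  generalize y / A = r at *
  rw [key, abs_div, abs_of_pos hB]
  apply div_le_div_of_nonneg_right _ hB.le
  have p1 : (M - A) * (B - M) ≤ k ^ 2 * h ^ 2 := by
    calc _ ≤ (k * h) * (k * h) := mul_le_mul i2 i4 i3 (by positivity)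
      _ = _ := by ring
  have p0 : 0 ≤ (M - A) * (B - M) := mul_nonneg i1 i3
  have q0 : 0 ≤ M * (A + B - 2 * M) := mul_nonneg hM.le (by linarith)
  have q1 : M * (A + B - 2 * M) ≤ 3 * k * h ^ 2 :=
    mul_le_mul hM3 c3 (by linarith) (by positivity)
  have s0 : 0 ≤ h * (B - M) := mul_nonneg hh0.le i3
  have s1 : h * (B - M) ≤ k * h ^ 2 := by nlinarith
  have t1 : r * ((M - A) * (B - M)) ≤ (M - A) * (B - M) := mul_le_of_le_one_left p0 hr1
  have t2 : r * (M * (A + B - 2 * M)) ≤ M * (A + B - 2 * M) := mul_le_of_le_one_left q0 hr1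
  have t3 := mul_nonneg hr0 p0
  have t4 := mul_nonneg hr0 q0
  have w1 : 0 ≤ k * h ^ 2 := by positivity
  have w2 : 0 ≤ k ^ 2 * h ^ 2 := by positivity
  rw [abs_le]
  constructor <;> linarith

theorem stmt_12 (ε k : ℝ) (hε : 0 < ε) (hεk : ε < k) (hk : k < 1 / 2)
    (φ : ℝ → ℝ) (hφc : Continuous φ) (hφ0 : ∀ x, 0 ≤ φ x) (hφ1 : ∀ x, φ x ≤ 1)
    (hφsupp : ∀ x, x ∉ Set.Icc (-k) k → φ x = 0)
    (hφint : (∫ x, φ x) = k)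
    (f f' : ℝ → ℝ)
    (hfd : ∀ x, HasDerivAt f (f' x) x)
    (hfd2 : ∀ x, HasDerivAt f' (φ x) x)
    (hf'm1 : f' (-1) = 0) (hfm1 : f (-1) = ε)
    (x x' y : ℝ) (hx : x ∈ Set.Icc (-1 : ℝ) 1) (hx' : x' ∈ Set.Icc (-1 : ℝ) 1)
    (hlt : x < x') (hy0 : 0 ≤ y) (hyf : y ≤ f x) (hyf' : y + (x' - x) / 2 ≤ f x') :
    |(1 / 2) * (y / f x + (y + (x' - x) / 2) / f x') * f ((x + x') / 2) - y - (x' - x) / 4| ≤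
      (2 * k ^ 2 + 4 * k) * ((x' - x) / 2) ^ 2 / f x' := by
  have hint : MeasureTheory.Integrable φ := by
    by_contra hc
    rw [MeasureTheory.integral_undef hc] at hφint
    linarith
  have hk0 : 0 < k := by linarith
  have hmono : Monotone f' :=
    monotone_of_deriv_nonneg (fun t => (hfd2 t).differentiableAt)
      (fun t => by rw [(hfd2 t).deriv]; exact hφ0 t)
  have hf'0 : ∀ t, -1 ≤ t → 0 ≤ f' t := fun t ht => by
    have := hmono ht
    linarith
  have hf'k : ∀ t, -1 ≤ t → f' t ≤ k := fun t ht => by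
    have h1 : ∫ s in (-1:ℝ)..t, φ s = f' t - f' (-1) :=
      intervalIntegral.integral_eq_sub_of_hasDerivAt (fun s _ => hfd2 s)
        (hφc.intervalIntegrable _ _)
    rw [intervalIntegral.integral_of_le ht] at h1
    have h2 : ∫ s in Set.Ioc (-1:ℝ) t, φ s ≤ ∫ s, φ s :=
      MeasureTheory.setIntegral_le_integral hint (Filter.Eventually.of_forall hφ0)
    linarith
  have hfc : Continuous f := continuous_iff_continuousAt.2 fun t => (hfd t).continuousAt
  have incr : ∀ a b, -1 ≤ a → a ≤ b → 0 ≤ f b - f a ∧ f b - f a ≤ k * (b - a) := by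
    intro a b ha hab
    rcases eq_or_lt_of_le hab with rfl | hab
    · simp
    obtain ⟨c, hc, hce⟩ := exists_hasDerivAt_eq_slope f f' hab hfc.continuousOn
      (fun t _ => hfd t)
    have hba : 0 < b - a := by linarith
    have h1 : f b - f a = f' c * (b - a) := by rw [hce]; field_simp
    have hc1 : -1 ≤ c := by linarith [hc.1]
    rw [h1]
    exact ⟨mul_nonneg (hf'0 c hc1) hba.le, mul_le_mul_of_nonneg_right (hf'k c hc1) hba.le⟩
  have hconv : ConvexOn ℝ Set.univ f := by
    apply Monotone.convexOn_univ_of_deriv (fun t => (hfd t).differentiableAt)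
    rwa [show deriv f = f' from funext fun t => (hfd t).deriv]
  have hud : ∀ t, HasDerivAt (fun t => t ^ 2 / 2 - f t) (t - f' t) t := fun t => by
    have := ((hasDerivAt_pow 2 t).div_const 2).sub (hfd t)
    exact this.congr_deriv (by norm_num)
  have hud2 : ∀ t, HasDerivAt (fun t => t - f' t) (1 - φ t) t := fun t =>
    (hasDerivAt_id t).sub (hfd2 t)
  have hconv2 : ConvexOn ℝ Set.univ (fun t => t ^ 2 / 2 - f t) := by
    apply Monotone.convexOn_univ_of_deriv (fun t => (hud t).differentiableAt)
    rw [show deriv (fun t => t ^ 2 / 2 - f t) = fun t => t - f' t from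
      funext fun t => (hud t).deriv]
    exact monotone_of_deriv_nonneg (fun t => (hud2 t).differentiableAt)
      (fun t => by rw [(hud2 t).deriv]; linarith [hφ1 t])
  have c1 := hconv.2 (Set.mem_univ x) (Set.mem_univ x') (by norm_num : (0:ℝ) ≤ 1/2)
    (by norm_num : (0:ℝ) ≤ 1/2) (by norm_num)
  have c2 := hconv2.2 (Set.mem_univ x) (Set.mem_univ x') (by norm_num : (0:ℝ) ≤ 1/2)
    (by norm_num : (0:ℝ) ≤ 1/2) (by norm_num)
  simp only [smul_eq_mul] at c1 c2
  rw [show 1 / 2 * x + 1 / 2 * x' = (x + x') / 2 by ring] at c1 c2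
  obtain ⟨i1, i2⟩ := incr x ((x + x') / 2) hx.1 (by linarith)
  obtain ⟨i3, i4⟩ := incr ((x + x') / 2) x' (by linarith [hx.1]) (by linarith)
  obtain ⟨i5, -⟩ := incr (-1) x le_rfl hx.1
  obtain ⟨-, i6⟩ := incr (-1) ((x + x') / 2) le_rfl (by linarith [hx.1])
  have hm1 : (x + x') / 2 ≤ 1 := by linarith [hx.2, hx'.2]
  have hM3 : f ((x + x') / 2) ≤ 3 * k := by nlinarith
  obtain ⟨h, hh⟩ : ∃ h, h = (x' - x) / 2 := ⟨_, rfl⟩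
  have hh0 : 0 < h := by linarith
  rw [show (x' - x) / 4 = h / 2 by rw [hh]; ring, ← hh]
  rw [show (x + x') / 2 - x = h by rw [hh]; ring] at i2
  rw [show x' - (x + x') / 2 = h by rw [hh]; ring] at i4
  have c3 : f x + f x' - 2 * f ((x + x') / 2) ≤ h ^ 2 := by rw [hh]; nlinarith
  have hA : 0 < f x := by linarith
  exact aux_alg_s12 k h y _ _ _ hk0 hh0 hA hy0 hyf i1 i2 i3 i4 hM3 (by linarith) c3
end

section
/- Define F : X_ε → ℝ² by F(x,y) = (x, y·f₀(x)/f_ε(x)). Then F maps X_ε onto X₀, and the pushforward of m_ε under F equals m₀: F_# m_ε = m₀. -/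
open MeasureTheory

lemma stmt_15_aux (K : ℝ) (g : ℝ → ℝ) (hg : Measurable g) (A : Set ℝ) (hA : MeasurableSet A)
    (hpos : ∀ x ∈ A, 0 < g x) (H : ℝ × ℝ → ENNReal) (hH : Measurable H)
    (T : Set (ℝ × ℝ)) (hT : T = {p : ℝ × ℝ | p.1 ∈ A ∧ 0 ≤ p.2 ∧ p.2 ≤ g p.1}) :
    ∫⁻ z, H z ∂((volume : Measure (ℝ × ℝ)).withDensity (T.indicator fun z =>
      ENNReal.ofReal ((1 / g z.1) * Real.exp (-K * (z.2 / g z.1) ^ 2)))) =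
    ∫⁻ x in A, ∫⁻ t in Set.Icc (0 : ℝ) 1, ENNReal.ofReal (Real.exp (-K * t ^ 2)) * H (x, t * g x) := by
  have hTm : MeasurableSet T := by
    have h1 : MeasurableSet {p : ℝ × ℝ | p.1 ∈ A} := measurable_fst hA
    have h2 : MeasurableSet {p : ℝ × ℝ | 0 ≤ p.2} := measurableSet_le measurable_const measurable_snd
    have h3 : MeasurableSet {p : ℝ × ℝ | p.2 ≤ g p.1} :=
      measurableSet_le measurable_snd (hg.comp measurable_fst)
    rw [hT]
    exact h1.inter (h2.inter h3)
  have hD : Measurable (T.indicator fun z : ℝ × ℝ =>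
      ENNReal.ofReal ((1 / g z.1) * Real.exp (-K * (z.2 / g z.1) ^ 2))) := by
    refine Measurable.indicator ?_ hTm
    have : Measurable fun z : ℝ × ℝ => g z.1 := hg.comp measurable_fst
    fun_prop
  rw [lintegral_withDensity_eq_lintegral_mul _ hD hH, Measure.volume_eq_prod,
    lintegral_prod _ (hD.mul hH).aemeasurable, ← lintegral_indicator hA]
  refine lintegral_congr fun x => ?_
  by_cases hx : x ∈ A
  · rw [Set.indicator_of_mem hx]
    have hgx := hpos x hx
    have hsc := Real.smul_map_volume_mul_right hgx.ne'
    have hmeas : Measurable fun y : ℝ => (T.indicator (fun z : ℝ × ℝ =>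
      ENNReal.ofReal ((1 / g z.1) * Real.exp (-K * (z.2 / g z.1) ^ 2))) * H) (x, y) :=
      (hD.mul hH).comp measurable_prodMk_left
    have hmeas2 : Measurable fun t : ℝ => (T.indicator (fun z : ℝ × ℝ =>
      ENNReal.ofReal ((1 / g z.1) * Real.exp (-K * (z.2 / g z.1) ^ 2))) * H) (x, t * g x) :=
      hmeas.comp (measurable_mul_const _)
    conv_lhs => rw [← hsc]
    rw [lintegral_smul_measure, lintegral_map hmeas (measurable_mul_const _), smul_eq_mul,
      ← lintegral_const_mul _ hmeas2,
      ← lintegral_indicator measurableSet_Icc]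
    refine lintegral_congr fun t => ?_
    have hmem : ((x, t * g x) ∈ T) ↔ t ∈ Set.Icc (0 : ℝ) 1 := by
      rw [hT]
      simp only [Set.mem_ofPred_eq, Set.mem_Icc, hx, true_and]
      refine and_congr ?_ ?_
      · exact mul_nonneg_iff_of_pos_right hgx
      · exact mul_le_iff_le_one_left hgx
    by_cases ht : t ∈ Set.Icc (0 : ℝ) 1
    · rw [Set.indicator_of_mem ht, Pi.mul_apply, Set.indicator_of_mem (hmem.2 ht), ← mul_assoc,
        ← ENNReal.ofReal_mul (abs_nonneg _), abs_of_pos hgx]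
      congr 2
      dsimp only
      rw [mul_div_cancel_right₀ _ hgx.ne']
      field_simp
    · rw [Set.indicator_of_notMem ht, Pi.mul_apply, Set.indicator_of_notMem (fun h => ht (hmem.1 h))]
      simp
  · rw [Set.indicator_of_notMem hx]
    have : ∀ y, (x, y) ∉ T := fun y hy => hx (by rw [hT] at hy; exact hy.1)
    simp [this]

theorem stmt_15 (ε k K : ℝ) (hε : 0 < ε) (hεk : ε < k) (hk : k < 1 / 2) (hK : 1 ≤ K)
    (φ : ℝ → ℝ) (hφc : Continuous φ) (hφ0 : ∀ x, 0 ≤ φ x) (hφ1 : ∀ x, φ x ≤ 1)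
    (hφsupp : ∀ x, x ∉ Set.Icc (-k) k → φ x = 0)
    (hφint : (∫ x, φ x) = k)
    (f₀ f₀' : ℝ → ℝ)
    (hfd : ∀ x, HasDerivAt f₀ (f₀' x) x)
    (hfd2 : ∀ x, HasDerivAt f₀' (φ x) x)
    (hf'm1 : f₀' (-1) = 0) (hfm1 : f₀ (-1) = 0)
    (fε : ℝ → ℝ) (hfε : fε = fun x => f₀ x + ε)
    (Xε X₀ : Set (ℝ × ℝ))
    (hXε : Xε = {p : ℝ × ℝ | p.1 ∈ Set.Icc (-1 : ℝ) 1 ∧ 0 ≤ p.2 ∧ p.2 ≤ fε p.1})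
    (hX₀ : X₀ = {p : ℝ × ℝ | p.1 ∈ Set.Icc (-1 : ℝ) 1 ∧ 0 ≤ p.2 ∧ p.2 ≤ f₀ p.1})
    (mε m₀ : Measure (ℝ × ℝ))
    (hmε : mε = volume.withDensity
      (Xε.indicator fun z => ENNReal.ofReal ((1 / fε z.1) * Real.exp (-K * (z.2 / fε z.1) ^ 2))))
    (hm₀ : m₀ = (ENNReal.ofReal (∫ y in (0 : ℝ)..1, Real.exp (-K * y ^ 2))) •
        ((Measure.hausdorffMeasure 1 : Measure (ℝ × ℝ)).restrict
          {p : ℝ × ℝ | p.2 = 0 ∧ p.1 ∈ Set.Icc (-1 : ℝ) 1 ∧ f₀ p.1 = 0}) +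
      volume.withDensity
        (Set.indicator {p : ℝ × ℝ | p ∈ X₀ ∧ 0 < f₀ p.1}
          fun z => ENNReal.ofReal ((1 / f₀ z.1) * Real.exp (-K * (z.2 / f₀ z.1) ^ 2))))
    (F : ℝ × ℝ → ℝ × ℝ) (hF : F = fun p => (p.1, p.2 * f₀ p.1 / fε p.1)) :
    F '' Xε = X₀ ∧ Measure.map F mε = m₀ := by
  have hc : Continuous f₀ := continuous_iff_continuousAt.2 fun x => (hfd x).continuousAt
  have hm' : Monotone f₀' := monotone_of_deriv_nonneg (fun x => (hfd2 x).differentiableAt)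
    (fun x => by rw [(hfd2 x).deriv]; exact hφ0 x)
  have hmono : MonotoneOn f₀ (Set.Ici (-1)) := by
    refine monotoneOn_of_deriv_nonneg (convex_Ici _) hc.continuousOn
      (fun x _ => (hfd x).differentiableAt.differentiableWithinAt) fun x hx => ?_
    rw [interior_Ici] at hx
    rw [(hfd x).deriv, ← hf'm1]
    exact hm' (le_of_lt hx)
  have hnn : ∀ x ∈ Set.Icc (-1 : ℝ) 1, 0 ≤ f₀ x := fun x hx => by
    rw [← hfm1]; exact hmono Set.self_mem_Ici hx.1 hx.1
  have hεpos : ∀ x ∈ Set.Icc (-1 : ℝ) 1, 0 < fε x := fun x hx => by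
    rw [hfε]; have := hnn x hx; dsimp only; linarith
  have hcε : Continuous fε := by rw [hfε]; fun_prop
  constructor
  · subst hF hXε hX₀
    ext ⟨a, b⟩
    constructor
    · rintro ⟨⟨x, y⟩, ⟨hx, hy0, hy1⟩, h⟩
      simp only [Prod.mk.injEq] at h hx hy0 hy1
      obtain ⟨rfl, rfl⟩ := h
      refine ⟨hx, div_nonneg (mul_nonneg hy0 (hnn x hx)) (hεpos x hx).le, ?_⟩
      dsimp only
      rw [div_le_iff₀ (hεpos x hx), mul_comm]
      exact mul_le_mul_of_nonneg_left hy1 (hnn x hx)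
    · rintro ⟨hx, hy0, hy1⟩
      dsimp only at hx hy0 hy1
      have h0 := hnn a hx
      have he := hεpos a hx
      rcases h0.eq_or_lt with h | h
      · refine ⟨(a, 0), ⟨hx, le_rfl, he.le⟩, ?_⟩
        have : b = 0 := by linarith
        simp [this]
      · refine ⟨(a, b * fε a / f₀ a), ⟨hx, by positivity, ?_⟩, ?_⟩
        · dsimp only
          rw [div_le_iff₀ h, mul_comm]
          exact mul_le_mul_of_nonneg_left hy1 he.le
        · dsimp only
          congr 1
          field_simp
  · have hFm : Measurable F := by
      have h1 := hc.measurable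
      have h2 := hcε.measurable
      rw [hF]; fun_prop
    ext S hS
    set A : Set ℝ := {x | x ∈ Set.Icc (-1 : ℝ) 1 ∧ 0 < f₀ x} with hAdef
    set B : Set ℝ := {x | x ∈ Set.Icc (-1 : ℝ) 1 ∧ f₀ x = 0} with hBdef
    have hA : MeasurableSet A :=
      measurableSet_Icc.inter (measurableSet_lt measurable_const hc.measurable)
    have hB : MeasurableSet B :=
      measurableSet_Icc.inter (measurableSet_eq_fun hc.measurable measurable_const)
    have hAB : Set.Icc (-1 : ℝ) 1 = B ∪ A := by
      ext x
      constructor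
      · intro hx
        rcases (hnn x hx).eq_or_lt with h | h
        · exact Or.inl ⟨hx, h.symm⟩
        · exact Or.inr ⟨hx, h⟩
      · rintro (h | h) <;> exact h.1
    have hdisj : Disjoint B A := Set.disjoint_left.2 fun x h1 h2 => h2.2.ne' h1.2
    have hind : Measurable (S.indicator (1 : ℝ × ℝ → ENNReal)) := measurable_one.indicator hS
    have hL : Measure.map F mε S = ∫⁻ x in Set.Icc (-1 : ℝ) 1, ∫⁻ t in Set.Icc (0 : ℝ) 1,
        ENNReal.ofReal (Real.exp (-K * t ^ 2)) * S.indicator 1 (x, t * f₀ x) := by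
      rw [← lintegral_indicator_one hS, lintegral_map hind hFm, hmε,
        stmt_15_aux K fε hcε.measurable _ measurableSet_Icc hεpos
          (fun z => S.indicator 1 (F z)) (hind.comp hFm) Xε hXε]
      refine setLIntegral_congr_fun measurableSet_Icc fun x hx => ?_
      have he := (hεpos x hx).ne'
      have : ∀ t : ℝ, F (x, t * fε x) = (x, t * f₀ x) := fun t => by
        rw [hF]; dsimp only; congr 1; field_simp
      simp only [this]
    have hR : (volume.withDensity
        (Set.indicator {p : ℝ × ℝ | p ∈ X₀ ∧ 0 < f₀ p.1}
          fun z => ENNReal.ofReal ((1 / f₀ z.1) * Real.exp (-K * (z.2 / f₀ z.1) ^ 2)))) S =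
        ∫⁻ x in A, ∫⁻ t in Set.Icc (0 : ℝ) 1,
        ENNReal.ofReal (Real.exp (-K * t ^ 2)) * S.indicator 1 (x, t * f₀ x) := by
      rw [← lintegral_indicator_one hS]
      refine stmt_15_aux K f₀ hc.measurable A hA (fun x hx => hx.2) _ hind _ ?_
      ext p
      simp only [hX₀, hAdef, Set.mem_ofPred_eq]
      tauto
    have hC : ∫⁻ t in Set.Icc (0 : ℝ) 1, ENNReal.ofReal (Real.exp (-K * t ^ 2)) =
        ENNReal.ofReal (∫ y in (0 : ℝ)..1, Real.exp (-K * y ^ 2)) := by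
      have hcont : Continuous fun t : ℝ => Real.exp (-K * t ^ 2) := by fun_prop
      rw [intervalIntegral.integral_of_le zero_le_one, ← integral_Icc_eq_integral_Ioc,
        ofReal_integral_eq_lintegral_ofReal (hcont.continuousOn.integrableOn_compact isCompact_Icc)
          (Filter.Eventually.of_forall fun t => (Real.exp_pos _).le)]
    have hiso : Isometry (fun x : ℝ => (x, (0 : ℝ))) := by
      refine Isometry.of_dist_eq fun x y => ?_
      simp [Prod.dist_eq]
    have hH : (Measure.hausdorffMeasure 1 : Measure (ℝ × ℝ)).restrict
          {p : ℝ × ℝ | p.2 = 0 ∧ p.1 ∈ Set.Icc (-1 : ℝ) 1 ∧ f₀ p.1 = 0} S =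
        ∫⁻ x in B, S.indicator 1 (x, (0 : ℝ)) := by
      have e1 : S ∩ {p : ℝ × ℝ | p.2 = 0 ∧ p.1 ∈ Set.Icc (-1 : ℝ) 1 ∧ f₀ p.1 = 0} =
          (fun x : ℝ => (x, (0 : ℝ))) '' ((fun x : ℝ => (x, (0 : ℝ))) ⁻¹' S ∩ B) := by
        ext ⟨a, b⟩
        constructor
        · rintro ⟨h1, h2, h3⟩
          dsimp only at h2 h3
          subst h2
          exact ⟨a, ⟨h1, h3⟩, rfl⟩
        · rintro ⟨x, ⟨h1, h2⟩, h⟩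
          simp only [Prod.mk.injEq] at h
          obtain ⟨rfl, rfl⟩ := h
          exact ⟨h1, rfl, h2⟩
      have hpre : MeasurableSet ((fun x : ℝ => (x, (0 : ℝ))) ⁻¹' S) :=
        hiso.continuous.measurable hS
      rw [Measure.restrict_apply hS, e1, hiso.hausdorffMeasure_image (Or.inl zero_le_one),
        hausdorffMeasure_real, ← Measure.restrict_apply hpre, ← lintegral_indicator_one hpre]
      rfl
    have hmeas3 : Measurable fun x : ℝ => S.indicator (1 : ℝ × ℝ → ENNReal) (x, (0 : ℝ)) :=
      hind.comp hiso.continuous.measurable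
    rw [hL, hm₀, Measure.add_apply, Measure.smul_apply, hR, hH, hAB,
      lintegral_union hA hdisj, smul_eq_mul, ← lintegral_const_mul _ hmeas3]
    congr 1
    refine setLIntegral_congr_fun hB fun x hx => ?_
    have hx0 : f₀ x = 0 := hx.2
    simp only [hx0, mul_zero]
    rw [lintegral_mul_const _ (by fun_prop), hC]
end

section
/- Define F : X_ε → ℝ² by F(x,y) = (x, y·f₀(x)/f_ε(x)). Then F is a 2ε-isometry for the sup-distance: for all p, q ∈ X_ε, | d_∞(F(p), F(q)) − d_∞(p,q) | ≤ 2ε, where d_∞((x,y),(x',y')) = max(|x−x'|,|y−y'|). -/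
theorem stmt_16 (ε k : ℝ) (hε : 0 < ε) (hεk : ε < k) (hk : k < 1 / 2)
    (φ : ℝ → ℝ) (hφc : Continuous φ) (hφ0 : ∀ x, 0 ≤ φ x) (hφ1 : ∀ x, φ x ≤ 1)
    (hφsupp : ∀ x, x ∉ Set.Icc (-k) k → φ x = 0)
    (hφint : (∫ x, φ x) = k)
    (f₀ f₀' : ℝ → ℝ)
    (hfd : ∀ x, HasDerivAt f₀ (f₀' x) x)
    (hfd2 : ∀ x, HasDerivAt f₀' (φ x) x)
    (hf'm1 : f₀' (-1) = 0) (hfm1 : f₀ (-1) = 0)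
    (fε : ℝ → ℝ) (hfε : fε = fun x => f₀ x + ε)
    (Xε : Set (ℝ × ℝ))
    (hXε : Xε = {p : ℝ × ℝ | p.1 ∈ Set.Icc (-1 : ℝ) 1 ∧ 0 ≤ p.2 ∧ p.2 ≤ fε p.1})
    (F : ℝ × ℝ → ℝ × ℝ) (hF : F = fun p => (p.1, p.2 * f₀ p.1 / fε p.1)) :
    ∀ p ∈ Xε, ∀ q ∈ Xε, |dist (F p) (F q) - dist p q| ≤ 2 * ε := by
  have hmono' : Monotone f₀' := by
    apply monotone_of_deriv_nonneg (fun x => (hfd2 x).differentiableAt)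
    intro x
    rw [(hfd2 x).deriv]
    exact hφ0 x
  have hmono : MonotoneOn f₀ (Set.Ici (-1)) := by
    apply monotoneOn_of_deriv_nonneg (convex_Ici _)
    · exact fun x _ => (hfd x).continuousAt.continuousWithinAt
    · exact fun x _ => (hfd x).differentiableAt.differentiableWithinAt
    · intro x hx
      rw [interior_Ici] at hx
      rw [(hfd x).deriv, ← hf'm1]
      exact hmono' (le_of_lt hx)
  have hpos : ∀ x ∈ Set.Icc (-1 : ℝ) 1, 0 ≤ f₀ x := by
    intro x hx
    rw [← hfm1]
    exact hmono (Set.mem_Ici.2 le_rfl) (Set.mem_Ici.2 hx.1) hx.1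
  have key : ∀ p ∈ Xε, dist (F p) p ≤ ε := by
    intro p hp
    rw [hXε, hfε] at hp
    obtain ⟨hx, hy0, hy1⟩ := hp
    have h0 := hpos _ hx
    have hy1 : p.2 ≤ f₀ p.1 + ε := hy1
    have hpos' : 0 < f₀ p.1 + ε := by linarith
    have e : p.2 * f₀ p.1 / (f₀ p.1 + ε) - p.2 = -(p.2 * ε / (f₀ p.1 + ε)) := by
      field_simp
      ring
    rw [hF, hfε, Prod.dist_eq]
    simp only [dist_self]
    refine max_le hε.le ?_
    rw [Real.dist_eq, e, abs_neg, abs_of_nonneg (by positivity), div_le_iff₀ hpos']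
    nlinarith
  intro p hp q hq
  have h1 := key p hp
  have h2 := key q hq
  have h3 := dist_triangle4 (F p) p q (F q)
  have h4 := dist_triangle4 p (F p) (F q) q
  rw [dist_comm q (F q)] at h3
  rw [dist_comm p (F p)] at h4
  rw [abs_le]
  constructor <;> linarith
end
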